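/- Let P and P' be convex polytopes in ℝ³ with non-empty interior such that g_P = g_{P'}. Suppose that for some w ∈ S², S₁ := P_w and S₂ := P_{−w} are parallel edges of P of equal length. Then S₁' := P'_w and S₂' := P'_{−w} are edges of P' parallel to S₁ whose lengths equal λ₁(S₁). Moreover, either cone(P,S₁) = cone(P',S₁') and cone(P,S₂) = cone(P',S₂'), or else cone(P,S₁) = −cone(P',S₂') and cone(P,S₂) = −cone(P',S₁'). -/

import Mathlib

open MeasureTheory Pointwise

/-- The covariogram of a set `K ⊆ ℝ³`: `g_K(x) = λ₃(K ∩ (K + x))`. -/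
noncomputable def covariogram (K : Set (EuclideanSpace ℝ (Fin 3)))
    (x : EuclideanSpace ℝ (Fin 3)) : ℝ :=
  (volume (K ∩ ((x + ·) '' K))).toReal

/-- A (compact) convex polytope: the convex hull of a finite set. -/
def IsPolytope (P : Set (EuclideanSpace ℝ (Fin 3))) : Prop :=
  ∃ S : Finset (EuclideanSpace ℝ (Fin 3)),
    P = convexHull ℝ (S : Set (EuclideanSpace ℝ (Fin 3)))

/-- The exposed face of `P` in direction `w`: `P_w = {x ∈ P : x·w = h_P(w)}`. -/
def exposedFace (P : Set (EuclideanSpace ℝ (Fin 3)))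
    (w : EuclideanSpace ℝ (Fin 3)) : Set (EuclideanSpace ℝ (Fin 3)) :=
  {x ∈ P | ∀ y ∈ P, @inner ℝ _ _ w y ≤ @inner ℝ _ _ w x}

/-- The support cone of `P` at a face `F`:
`cone(P,F) = {μ(y − x) : y ∈ P, μ ≥ 0}` for `x ∈ relint F`. -/
def supportCone (P F : Set (EuclideanSpace ℝ (Fin 3))) :
    Set (EuclideanSpace ℝ (Fin 3)) :=
  {v | ∃ x ∈ intrinsicInterior ℝ F, ∃ y ∈ P, ∃ μ : ℝ, 0 ≤ μ ∧ v = μ • (y - x)}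

/-- Coordinate space: triples `(s, t, x)`. -/
abbrev F3 : Type := ℝ × ℝ × ℝ

/-- Euclidean three-space. -/
abbrev E3 : Type := EuclideanSpace ℝ (Fin 3)

instance instHaarR2 : (volume : Measure (ℝ × ℝ)).IsAddHaarMeasure :=
  Measure.prod.instIsAddHaarMeasure (volume : Measure ℝ) (volume : Measure ℝ)

instance instHaarF3 : (volume : Measure F3).IsAddHaarMeasure :=
  Measure.prod.instIsAddHaarMeasure (volume : Measure ℝ) (volume : Measure (ℝ × ℝ))

lemma laplace_conv (K1 K2 : Set F3) (h1 : MeasurableSet K1) (h2 : MeasurableSet K2)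
    (χ : F3 → ENNReal) (hχ : Measurable χ) (hm : ∀ x y, χ (x + y) = χ x * χ y) :
    (∫⁻ y in K1, χ y) * (∫⁻ y in K2, χ y) =
      ∫⁻ z, χ z * volume (K1 ∩ {y | z - y ∈ K2}) := by
  have e1 : ∀ z, χ z * volume (K1 ∩ {y | z - y ∈ K2}) =
      ∫⁻ y, χ z * (K1.indicator 1 y * K2.indicator 1 (z - y)) := by
    intro z
    rw [lintegral_const_mul]
    · congr 1
      have hms : MeasurableSet (K1 ∩ {y | z - y ∈ K2}) :=
        h1.inter ((measurable_const.sub measurable_id) h2)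
      rw [← lintegral_indicator_one hms]
      apply lintegral_congr
      intro y
      by_cases ha : y ∈ K1 <;> by_cases hb : z - y ∈ K2 <;> simp [Set.indicator, ha, hb]
    · exact ((measurable_one.indicator h1)).mul
        ((measurable_one.indicator h2).comp (measurable_const.sub measurable_id))
  simp_rw [e1]
  rw [lintegral_lintegral_swap]
  · have e2 : ∀ y, ∫⁻ z, χ z * (K1.indicator 1 y * K2.indicator 1 (z - y)) =
        (K1.indicator χ y) * ∫⁻ z in K2, χ z := by
      intro y
      rw [← lintegral_add_right_eq_self _ y, ← lintegral_indicator h2, ← lintegral_const_mul]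
      · apply lintegral_congr
        intro z
        by_cases ha : y ∈ K1 <;> by_cases hb : z ∈ K2 <;> simp [Set.indicator, ha, hb, hm, mul_comm]
      · exact hχ.indicator h2
    simp_rw [e2]
    rw [lintegral_mul_const _ (hχ.indicator h1), lintegral_indicator h1]
  · apply Measurable.aemeasurable
    exact (hχ.comp measurable_fst).mul
      (((measurable_one.indicator h1).comp measurable_snd).mul
        ((measurable_one.indicator h2).comp (measurable_fst.sub measurable_snd)))

lemma volume_preimage_eq (ψ : F3 ≃L[ℝ] E3) : ∃ c : NNReal, ∀ X : Set E3, MeasurableSet X →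
    volume (ψ ⁻¹' X) = c * volume X := by
  have := ContinuousLinearEquiv.isAddHaarMeasure_map ψ (volume : Measure F3)
  refine ⟨Measure.addHaarScalarFactor (Measure.map ψ (volume : Measure F3)) (volume : Measure E3),
    fun X hX => ?_⟩
  have h := Measure.isAddLeftInvariant_eq_smul (Measure.map ψ (volume : Measure F3)) (volume : Measure E3)
  rw [← Measure.map_apply ψ.continuous.measurable hX]
  conv_lhs => rw [h]
  rfl

lemma laplace_prod_eq (P P' : Set E3) (hP : IsCompact P) (hP' : IsCompact P')
    (hcov : covariogram P = covariogram P') (a c a' c' : E3) (hac : a + c = a' + c')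
    (ψ : F3 ≃L[ℝ] E3) (χ : F3 → ENNReal) (hχ : Measurable χ)
    (hm : ∀ x y, χ (x + y) = χ x * χ y) :
    (∫⁻ y in {k | a + ψ k ∈ P}, χ y) * (∫⁻ y in {k | c + ψ k ∈ -P}, χ y) =
    (∫⁻ y in {k | a' + ψ k ∈ P'}, χ y) * (∫⁻ y in {k | c' + ψ k ∈ -P'}, χ y) := by
  obtain ⟨r, hr⟩ := volume_preimage_eq ψ
  have meas : ∀ (Q : Set E3) (d : E3), IsCompact Q → MeasurableSet {k | d + ψ k ∈ Q} := by
    intro Q d hQ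
    exact (measurable_const.add ψ.continuous.measurable) hQ.measurableSet
  have key : ∀ (Q : Set E3) (d e : E3) (z : F3), IsCompact Q →
      volume ({k | d + ψ k ∈ Q} ∩ {y | z - y ∈ {k | e + ψ k ∈ -Q}}) =
        r * ENNReal.ofReal (covariogram Q (d + e + ψ z)) := by
    intro Q d e z hQ
    have hQm : MeasurableSet (Q ∩ (fun x => (d + e + ψ z) + x) '' Q) :=
      (hQ.inter (hQ.image (continuous_const.add continuous_id))).measurableSet
    have hset : ({k | d + ψ k ∈ Q} ∩ {y | z - y ∈ {k | e + ψ k ∈ -Q}}) =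
        ψ ⁻¹' ((fun x => d + x) ⁻¹' (Q ∩ (fun x => (d + e + ψ z) + x) '' Q)) := by
      ext k
      simp only [Set.mem_inter_iff, Set.mem_ofPred_eq, Set.mem_preimage, Set.mem_image, Set.mem_neg]
      refine and_congr_right fun _ => ⟨fun h => ⟨_, h, ?_⟩, ?_⟩
      · simp only [map_sub]; abel
      · rintro ⟨x, hx, hxe⟩
        have : x = -(e + ψ (z - k)) := by
          have : x = d + ψ k - (d + e + ψ z) := by rw [← hxe]; abel
          rw [this, map_sub]; abel
        rwa [← this]
    rw [hset, hr _ ((measurable_const_add d) hQm), measure_preimage_add]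
    unfold covariogram
    rw [ENNReal.ofReal_toReal]
    exact ((measure_mono Set.inter_subset_left).trans_lt hQ.measure_lt_top).ne
  rw [laplace_conv _ _ (meas _ _ hP) (meas _ _ hP.neg) χ hχ hm,
    laplace_conv _ _ (meas _ _ hP') (meas _ _ hP'.neg) χ hχ hm]
  apply lintegral_congr
  intro z
  rw [key P a c z hP, key P' a' c' z hP', hcov, hac]

/-- The planar cone of slopes between `α` and `β`, in coordinates `(t, x)`. -/
def planeCone (α β : ℝ) : Set (ℝ × ℝ) := {p | 0 ≤ p.1 ∧ α * p.1 ≤ p.2 ∧ p.2 ≤ β * p.1}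

lemma measurableSet_planeCone (α β : ℝ) : MeasurableSet (planeCone α β) := by
  apply IsClosed.measurableSet
  unfold planeCone
  apply IsClosed.inter
  · exact isClosed_le continuous_const continuous_fst
  apply IsClosed.inter
  · exact isClosed_le (continuous_const.mul continuous_fst) continuous_snd
  · exact isClosed_le continuous_snd (continuous_const.mul continuous_fst)

lemma inner_integral (q a b t : ℝ) (hq : 0 < q) (hab : a ≤ b) :
    ∫⁻ x in Set.Icc a b, ENNReal.ofReal (Real.exp (q * x - t)) =
      ENNReal.ofReal ((Real.exp (q * b - t) - Real.exp (q * a - t)) / q) := by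
  rw [← ofReal_integral_eq_lintegral_ofReal]
  · congr 1
    rw [integral_Icc_eq_integral_Ioc, ← intervalIntegral.integral_of_le hab]
    rw [intervalIntegral.integral_eq_sub_of_hasDerivAt (f := fun x => Real.exp (q * x - t) / q)]
    · ring
    · intro x _
      have : HasDerivAt (fun x => Real.exp (q * x - t) / q) (Real.exp (q * x - t) * (q * 1) / q) x :=
        ((((hasDerivAt_id x).const_mul q).sub_const t).exp).div_const q
      rw [mul_one, mul_div_cancel_right₀ _ hq.ne'] at this
      exact this
    · apply Continuous.intervalIntegrable
      fun_prop
  · exact (by fun_prop : Continuous fun x => Real.exp (q * x - t)).integrableOn_Icc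
  · exact Filter.Eventually.of_forall fun x => (Real.exp_pos _).le

lemma cone_integral (q α β : ℝ) (hq : 0 < q) (hαβ : α < β) (hα : 0 < 1 - q * α)
    (hβ : 0 < 1 - q * β) :
    ∫⁻ p in planeCone α β, ENNReal.ofReal (Real.exp (q * p.2 - p.1)) =
      ENNReal.ofReal ((β - α) / ((1 - q * α) * (1 - q * β))) := by
  have hmeas : Measurable fun p : ℝ × ℝ => ENNReal.ofReal (Real.exp (q * p.2 - p.1)) := by
    fun_prop
  rw [← lintegral_indicator (measurableSet_planeCone α β), Measure.volume_eq_prod,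
    lintegral_prod _ (hmeas.indicator (measurableSet_planeCone α β)).aemeasurable]
  have e : ∀ t : ℝ, ∫⁻ x, (planeCone α β).indicator
      (fun p : ℝ × ℝ => ENNReal.ofReal (Real.exp (q * p.2 - p.1))) (t, x) =
      (Set.Ici 0).indicator (fun t => ENNReal.ofReal
        ((Real.exp ((q * β - 1) * t) - Real.exp ((q * α - 1) * t)) / q)) t := by
    intro t
    by_cases ht : 0 ≤ t
    · have : ∀ x, (planeCone α β).indicator
          (fun p : ℝ × ℝ => ENNReal.ofReal (Real.exp (q * p.2 - p.1))) (t, x) =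
          (Set.Icc (α * t) (β * t)).indicator
            (fun x => ENNReal.ofReal (Real.exp (q * x - t))) x := by
        intro x
        have : (t, x) ∈ planeCone α β ↔ x ∈ Set.Icc (α * t) (β * t) := by
          simp [planeCone, ht]
        by_cases hx : x ∈ Set.Icc (α * t) (β * t)
        · rw [Set.indicator_of_mem hx, Set.indicator_of_mem (this.2 hx)]
        · rw [Set.indicator_of_notMem hx, Set.indicator_of_notMem (fun h => hx (this.1 h))]
      simp_rw [this]
      rw [lintegral_indicator measurableSet_Icc, inner_integral q _ _ t hq
        (mul_le_mul_of_nonneg_right hαβ.le ht), Set.indicator_of_mem (by exact ht)]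
      congr 5 <;> ring
    · rw [Set.indicator_of_notMem (by simpa using ht)]
      simp [planeCone, Set.indicator, ht]
  simp_rw [e]
  have i1 := integrableOn_exp_mul_Ioi (a := q * β - 1) (by linarith) 0
  have i2 := integrableOn_exp_mul_Ioi (a := q * α - 1) (by linarith) 0
  rw [lintegral_indicator measurableSet_Ici, setLIntegral_congr (Ioi_ae_eq_Ici).symm,
    ← ofReal_integral_eq_lintegral_ofReal]
  · congr 1
    rw [integral_div, integral_sub i1 i2, integral_exp_mul_Ioi (by linarith),
      integral_exp_mul_Ioi (by linarith)]
    have h1 : q * β - 1 ≠ 0 := by linarith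
    have h2 : q * α - 1 ≠ 0 := by linarith
    have h3 : 1 - q * β ≠ 0 := by linarith
    have h4 : 1 - q * α ≠ 0 := by linarith
    simp only [mul_zero, Real.exp_zero]
    have h5 : q * β - 1 = -(1 - q * β) := by ring
    have h6 : q * α - 1 = -(1 - q * α) := by ring
    rw [h5, h6]
    field_simp
    ring
  · exact (i1.sub i2).div_const q
  · filter_upwards [ae_restrict_mem measurableSet_Ioi] with t ht
    have ht : 0 < t := ht
    apply div_nonneg _ hq.le
    have : (q * α - 1) * t ≤ (q * β - 1) * t := by
      apply mul_le_mul_of_nonneg_right _ ht.le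
      nlinarith
    have := Real.exp_le_exp.2 this
    linarith

/-- `K` is the polytope in adapted coordinates. -/
structure Good (K : Set F3) (l α β : ℝ) : Prop where
  conv : Convex ℝ K
  cpt : IsCompact K
  hl : 0 ≤ l
  hαβ : α < β
  sub : ∀ p ∈ K, p.2 ∈ planeCone α β
  line : ∀ s : ℝ, ((s, 0, 0) : F3) ∈ K ↔ s ∈ Set.Icc 0 l
  left : ∃ s t : ℝ, 0 < t ∧ ((s, t, α * t) : F3) ∈ K
  right : ∃ s t : ℝ, 0 < t ∧ ((s, t, β * t) : F3) ∈ K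

lemma Good.exists_ray {K : Set F3} {l α β : ℝ} (h : Good K l α β) {t x : ℝ} (ht : 0 < t)
    (hx : (t, x) ∈ planeCone α β) : ∃ s κ : ℝ, 0 < κ ∧ ((s, κ * t, κ * x) : F3) ∈ K := by
  obtain ⟨s1, t1, ht1, h1⟩ := h.left
  obtain ⟨s2, t2, ht2, h2⟩ := h.right
  obtain ⟨-, hx1, hx2⟩ := hx
  simp only at hx1 hx2
  have hαβ := h.hαβ
  have hd : 0 < β - α := by linarith
  -- unnormalized weights
  set A := (β * t - x) * t2 with hA
  set B := (x - α * t) * t1 with hB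
  have hA0 : 0 ≤ A := mul_nonneg (by linarith) ht2.le
  have hB0 : 0 ≤ B := mul_nonneg (by linarith) ht1.le
  have hAB : 0 < A + B := by
    rcases lt_or_ge x (β * t) with h | h
    · have : 0 < A := mul_pos (by linarith) ht2
      linarith
    · have : 0 < B := mul_pos (by nlinarith) ht1
      linarith
  have hm := h.conv h1 h2 (div_nonneg hA0 hAB.le) (div_nonneg hB0 hAB.le) (by field_simp)
  refine ⟨A / (A + B) * s1 + B / (A + B) * s2, (β - α) * t1 * t2 / (A + B), by positivity, ?_⟩
  convert hm using 1
  ext <;> simp <;> field_simp <;> rw [hA, hB] <;> ring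

lemma Good.eventually_mem {K : Set F3} {l α β : ℝ} (h : Good K l α β) {s0 : ℝ}
    (hs0 : s0 ∈ Set.Ioo 0 l) (s : ℝ) {t x : ℝ} (hx : (t, x) ∈ planeCone α β) :
    ∀ᶠ ε : ℝ in nhdsWithin 0 (Set.Ioi 0), ((s0 + ε * s, ε * t, ε * x) : F3) ∈ K := by
  have key : ∃ s1 κ : ℝ, 0 < κ ∧ ((s1, κ * t, κ * x) : F3) ∈ K := by
    rcases hx.1.eq_or_lt with h0 | h0
    · simp only at h0
      have : x = 0 := by
        obtain ⟨_, h1, h2⟩ := hx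
        simp only [← h0, mul_zero] at h1 h2
        linarith
      subst this
      refine ⟨s0, 1, one_pos, ?_⟩
      rw [← h0]
      simpa using (h.line s0).2 ⟨hs0.1.le, hs0.2.le⟩
    · exact h.exists_ray h0 hx
  obtain ⟨s1, κ, hκ, hm⟩ := key
  have hlim : Filter.Tendsto (fun ε : ℝ => (s0 + ε * s - ε / κ * s1) / (1 - ε / κ))
      (nhds 0) (nhds s0) := by
    have : ContinuousAt (fun ε : ℝ => (s0 + ε * s - ε / κ * s1) / (1 - ε / κ)) 0 := by
      apply ContinuousAt.div
      · fun_prop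
      · fun_prop
      · simp
    simpa [ContinuousAt] using this
  have h1 : ∀ᶠ ε : ℝ in nhdsWithin 0 (Set.Ioi 0),
      (s0 + ε * s - ε / κ * s1) / (1 - ε / κ) ∈ Set.Ioo 0 l :=
    (hlim.mono_left nhdsWithin_le_nhds) (isOpen_Ioo.mem_nhds hs0)
  have h2 : ∀ᶠ ε : ℝ in nhdsWithin 0 (Set.Ioi 0), ε ∈ Set.Ioo 0 κ := Ioo_mem_nhdsGT hκ
  filter_upwards [h1, h2] with ε he1 he2
  have hd : 0 < 1 - ε / κ := by
    rw [sub_pos, div_lt_one hκ]; exact he2.2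
  have hn := h.conv ((h.line _).2 ⟨he1.1.le, he1.2.le⟩) hm hd.le (div_nonneg he2.1.le hκ.le)
    (by ring)
  convert hn using 1
  have hd' := hd.ne'
  ext
  · simp only [Prod.smul_mk, Prod.mk_add_mk, smul_eq_mul]
    rw [mul_div_cancel₀ _ hd']
    ring
  · simp; field_simp
  · simp; field_simp

/-- The exponential weight. -/
noncomputable def expW (τ q : ℝ) (p : F3) : ENNReal :=
  ENNReal.ofReal (Real.exp (τ * p.1)) * ENNReal.ofReal (Real.exp (q * p.2.2 - p.2.1))

lemma measurable_expW (τ q : ℝ) : Measurable (expW τ q) := by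
  unfold expW
  fun_prop

lemma expW_add (τ q : ℝ) (x y : F3) : expW τ q (x + y) = expW τ q x * expW τ q y := by
  unfold expW
  simp only [← ENNReal.ofReal_mul (Real.exp_pos _).le, ← Real.exp_add]
  congr 2
  simp
  ring

/-- Limit value of the segment factor. -/
noncomputable def segI (τ l : ℝ) : ℝ := ∫ s in (0 : ℝ)..l, Real.exp (τ * s)

lemma lintegral_seg (τ a b : ℝ) (hab : a ≤ b) :
    ∫⁻ s in Set.Icc a b, ENNReal.ofReal (Real.exp (τ * s)) =
      ENNReal.ofReal (∫ s in a..b, Real.exp (τ * s)) := by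
  rw [← ofReal_integral_eq_lintegral_ofReal]
  · rw [integral_Icc_eq_integral_Ioc, ← intervalIntegral.integral_of_le hab]
  · exact (by fun_prop : Continuous fun x => Real.exp (τ * x)).integrableOn_Icc
  · exact Filter.Eventually.of_forall fun x => (Real.exp_pos _).le

lemma lintegral_box (τ q a b α β : ℝ) (hab : a ≤ b) (hq : 0 < q) (hαβ : α < β)
    (hα : 0 < 1 - q * α) (hβ : 0 < 1 - q * β) :
    ∫⁻ p : F3, (Set.Icc a b ×ˢ planeCone α β).indicator (expW τ q) p =
      ENNReal.ofReal (∫ s in a..b, Real.exp (τ * s)) *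
        ENNReal.ofReal ((β - α) / ((1 - q * α) * (1 - q * β))) := by
  rw [← lintegral_seg τ a b hab, ← cone_integral q α β hq hαβ hα hβ,
    ← lintegral_indicator measurableSet_Icc,
    ← lintegral_indicator (measurableSet_planeCone α β), ← lintegral_prod_mul]
  · rw [← Measure.volume_eq_prod]
    apply lintegral_congr
    rintro ⟨s, p⟩
    by_cases h1 : s ∈ Set.Icc a b <;> by_cases h2 : p ∈ planeCone α β <;>
      simp only [Set.indicator, Set.mem_prod, h1, h2, expW] <;> simp
  · apply AEMeasurable.indicator _ measurableSet_Icc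
    fun_prop
  · apply AEMeasurable.indicator _ (measurableSet_planeCone α β)
    fun_prop

lemma Good.tendsto {K : Set F3} {l α β : ℝ} (h : Good K l α β) (τ q : ℝ) (hq : 0 < q)
    (hα : 0 < 1 - q * α) (hβ : 0 < 1 - q * β) :
    Filter.Tendsto (fun n : ℕ => ∫⁻ p in {p : F3 |
        ((p.1, (1 / ((n : ℝ) + 1)) * p.2.1, (1 / ((n : ℝ) + 1)) * p.2.2) : F3) ∈ K}, expW τ q p)
      Filter.atTop (nhds (ENNReal.ofReal (segI τ l) *
        ENNReal.ofReal ((β - α) / ((1 - q * α) * (1 - q * β))))) := by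
  have hKm : ∀ n : ℕ, MeasurableSet {p : F3 |
      ((p.1, (1 / ((n : ℝ) + 1)) * p.2.1, (1 / ((n : ℝ) + 1)) * p.2.2) : F3) ∈ K} := by
    intro n
    apply IsClosed.measurableSet
    exact h.cpt.isClosed.preimage (by fun_prop)
  -- bound on first coordinate
  obtain ⟨R, hR⟩ : ∃ R : ℝ, ∀ p ∈ K, p.1 ∈ Set.Icc (-R) R := by
    obtain ⟨R, hR⟩ := h.cpt.isBounded.exists_norm_le
    refine ⟨R, fun p hp => abs_le.1 ((norm_fst_le p).trans (hR p hp))⟩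
  have hR0 : 0 ≤ R := by
    have := hR _ ((h.line 0).2 ⟨le_rfl, h.hl⟩)
    exact this.2
  have scale : ∀ (ε : ℝ), 0 < ε → ∀ t x : ℝ, (ε * t, ε * x) ∈ planeCone α β →
      (t, x) ∈ planeCone α β := by
    rintro ε hε t x ⟨h1, h2, h3⟩
    simp only at h1 h2 h3
    refine ⟨nonneg_of_mul_nonneg_right h1 hε, ?_, ?_⟩
    · apply le_of_mul_le_mul_left _ hε
      linarith
    · apply le_of_mul_le_mul_left _ hε
      linarith
  have hεpos : ∀ n : ℕ, 0 < 1 / ((n : ℝ) + 1) := fun n => by positivity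
  rw [segI, ← lintegral_box τ q 0 l α β h.hl hq h.hαβ hα hβ]
  simp_rw [← lintegral_indicator (hKm _)]
  apply tendsto_lintegral_of_dominated_convergence
    ((Set.Icc (-R) R ×ˢ planeCone α β).indicator (expW τ q))
  · intro n
    exact (measurable_expW τ q).indicator (hKm n)
  · intro n
    refine Filter.Eventually.of_forall fun p => ?_
    apply Set.indicator_le_indicator_of_subset _ (fun _ => zero_le)
    intro p hp
    have hp : ((p.1, (1 / ((n : ℝ) + 1)) * p.2.1, (1 / ((n : ℝ) + 1)) * p.2.2) : F3) ∈ K := hp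
    have h1 := hR _ hp
    exact ⟨h1, scale _ (hεpos n) _ _ (h.sub _ hp)⟩
  · rw [lintegral_box τ q (-R) R α β (by linarith) hq h.hαβ hα hβ]
    exact ENNReal.mul_ne_top ENNReal.ofReal_ne_top ENNReal.ofReal_ne_top
  · have hae : ∀ᵐ p : F3, p.1 ≠ 0 ∧ p.1 ≠ l := by
      have h0 : ∀ c : ℝ, ∀ᵐ p : F3, p.1 ≠ c := by
        intro c
        have : ∀ᵐ s : ℝ, s ≠ c := by
          rw [ae_iff]; simp
        exact Measure.quasiMeasurePreserving_fst.ae this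
      filter_upwards [h0 0, h0 l] with p h1 h2 using ⟨h1, h2⟩
    have hε : Filter.Tendsto (fun n : ℕ => 1 / ((n : ℝ) + 1)) Filter.atTop
        (nhdsWithin 0 (Set.Ioi 0)) := by
      apply tendsto_nhdsWithin_iff.2
      exact ⟨tendsto_one_div_add_atTop_nhds_zero_nat,
        Filter.Eventually.of_forall fun n => hεpos n⟩
    filter_upwards [hae] with p hp
    apply tendsto_const_nhds.congr'
    obtain ⟨s, t, x⟩ := p
    simp only at hp
    by_cases hs : s ∈ Set.Icc 0 l
    · have hs' : s ∈ Set.Ioo 0 l :=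
        ⟨lt_of_le_of_ne hs.1 (Ne.symm hp.1), lt_of_le_of_ne hs.2 hp.2⟩
      by_cases hc : (t, x) ∈ planeCone α β
      · filter_upwards [hε.eventually (h.eventually_mem hs' 0 hc)] with n hn
        rw [Set.indicator_of_mem (by exact ⟨hs, hc⟩), Set.indicator_of_mem]
        simpa using hn
      · refine Filter.Eventually.of_forall fun n => ?_
        simp only
        rw [Set.indicator_of_notMem (fun hh => hc hh.2), Set.indicator_of_notMem]
        intro hh
        exact hc (scale _ (hεpos n) _ _ (h.sub _ hh))
    · have hnot : ((s, 0, 0) : F3) ∉ K := fun hh => hs ((h.line s).1 hh)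
      have hcont : Filter.Tendsto (fun ε : ℝ => ((s, ε * t, ε * x) : F3)) (nhds 0)
          (nhds (s, 0, 0)) := by
        have : Continuous (fun ε : ℝ => ((s, ε * t, ε * x) : F3)) := by fun_prop
        simpa using this.tendsto 0
      have := (hcont.comp (hε.mono_right nhdsWithin_le_nhds)).eventually
        (h.cpt.isClosed.isOpen_compl.mem_nhds hnot)
      filter_upwards [this] with n hn
      rw [Set.indicator_of_notMem (fun hh => hs hh.1), Set.indicator_of_notMem]
      exact hn

/-- Coordinates with respect to an orthonormal basis, the last two being scaled by `ε`. -/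
noncomputable def coordE (b : OrthonormalBasis (Fin 3) ℝ E3) (ε : ℝ) (hε : ε ≠ 0) :
    F3 ≃L[ℝ] E3 :=
  LinearEquiv.toContinuousLinearEquiv
    { toFun := fun p => p.1 • b 0 + (ε * p.2.2) • b 1 - (ε * p.2.1) • b 2
      map_add' := by
        intro p q
        simp only [Prod.fst_add, Prod.snd_add, mul_add, add_smul]
        abel
      map_smul' := by
        intro c p
        simp only [Prod.smul_fst, Prod.smul_snd, smul_eq_mul, RingHom.id_apply, smul_sub, smul_add,
          smul_smul]
        module
      invFun := fun v => (inner ℝ (b 0) v, -(inner ℝ (b 2) v) / ε, (inner ℝ (b 1) v) / ε)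
      left_inv := by
        intro p
        have h := orthonormal_iff_ite.1 b.orthonormal
        ext <;> simp [inner_add_right, inner_sub_right, inner_smul_right, h, hε]
      right_inv := by
        intro v
        have h := b.sum_repr' v
        rw [Fin.sum_univ_three] at h
        conv_rhs => rw [← h]
        simp only [mul_div_cancel₀ _ hε]
        rw [neg_smul]
        abel }

lemma coordE_apply (b : OrthonormalBasis (Fin 3) ℝ E3) (ε : ℝ) (hε : ε ≠ 0) (p : F3) :
    coordE b ε hε p = p.1 • b 0 + (ε * p.2.2) • b 1 - (ε * p.2.1) • b 2 := rfl

lemma coordE_eq_one (b : OrthonormalBasis (Fin 3) ℝ E3) (ε : ℝ) (hε : ε ≠ 0) (p : F3) :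
    coordE b ε hε p = coordE b 1 one_ne_zero (p.1, ε * p.2.1, ε * p.2.2) := by
  simp [coordE_apply]

lemma inner0 (b : OrthonormalBasis (Fin 3) ℝ E3) (p : F3) :
    inner ℝ (b 0) (coordE b 1 one_ne_zero p) = p.1 := by
  have h := orthonormal_iff_ite.1 b.orthonormal
  simp [coordE_apply, inner_add_right, inner_sub_right, inner_smul_right, h]

lemma inner1 (b : OrthonormalBasis (Fin 3) ℝ E3) (p : F3) :
    inner ℝ (b 1) (coordE b 1 one_ne_zero p) = p.2.2 := by
  have h := orthonormal_iff_ite.1 b.orthonormal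
  simp [coordE_apply, inner_add_right, inner_sub_right, inner_smul_right, h]

lemma inner2 (b : OrthonormalBasis (Fin 3) ℝ E3) (p : F3) :
    inner ℝ (b 2) (coordE b 1 one_ne_zero p) = -p.2.1 := by
  have h := orthonormal_iff_ite.1 b.orthonormal
  simp [coordE_apply, inner_add_right, inner_sub_right, inner_smul_right, h]

lemma IsPolytope.isCompact {P : Set E3} (hP : IsPolytope P) : IsCompact P := by
  obtain ⟨S, rfl⟩ := hP
  exact S.finite_toSet.isCompact_convexHull ℝ

lemma IsPolytope.convex {P : Set E3} (hP : IsPolytope P) : Convex ℝ P := by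
  obtain ⟨S, rfl⟩ := hP
  exact convex_convexHull ℝ _

lemma IsPolytope.neg {P : Set E3} (hP : IsPolytope P) : IsPolytope (-P) := by
  classical
  obtain ⟨S, rfl⟩ := hP
  refine ⟨S.image (fun x => -x), ?_⟩
  rw [← convexHull_neg]
  congr 1
  ext x
  simp

lemma not_flat {P : Set E3} (hInt : (interior P).Nonempty) (v : E3) (c : ℝ)
    (h : ∀ y ∈ P, inner ℝ v y = c) : v = 0 := by
  obtain ⟨z, hz⟩ := hInt
  have hlim : Filter.Tendsto (fun ε : ℝ => z + ε • v) (nhdsWithin 0 (Set.Ioi 0)) (nhds z) := by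
    have : Continuous (fun ε : ℝ => z + ε • v) := by fun_prop
    have := this.tendsto 0
    simp only [zero_smul, add_zero] at this
    exact this.mono_left nhdsWithin_le_nhds
  have h1 := hlim.eventually (mem_interior_iff_mem_nhds.1 hz)
  obtain ⟨ε, hε, hε0⟩ := (h1.and self_mem_nhdsWithin).exists
  have h2 := h _ hε
  have h3 := h _ (interior_subset hz)
  rw [inner_add_right, inner_smul_right, h3] at h2
  have : ε * inner ℝ v v = 0 := by linarith
  rcases mul_eq_zero.1 this with h4 | h4
  · exact absurd h4 (ne_of_gt hε0)
  · exact inner_self_eq_zero.1 h4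

lemma exists_good (b : OrthonormalBasis (Fin 3) ℝ E3) (P : Set E3) (hP : IsPolytope P)
    (hInt : (interior P).Nonempty)
    (hface : ∀ x ∈ exposedFace P (b 2), ∀ y ∈ exposedFace P (b 2),
      inner ℝ (b 1) x = inner ℝ (b 1) y) :
    ∃ (a : E3) (l α β : ℝ), Good {k | a + coordE b 1 one_ne_zero k ∈ P} l α β ∧
      exposedFace P (b 2) = (fun s : ℝ => a + s • b 0) '' Set.Icc 0 l := by
  have hcpt := hP.isCompact
  have hconv := hP.convex
  have hne : P.Nonempty := hInt.mono interior_subset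
  have horth := orthonormal_iff_ite.1 b.orthonormal
  have h20 : inner ℝ (b 2) (b 0) = 0 := by simp [horth]
  have h10 : inner ℝ (b 1) (b 0) = 0 := by simp [horth]
  have h00 : inner ℝ (b 0) (b 0) = (1 : ℝ) := by simp
  set w := b 2 with hw
  have hFc : IsCompact (exposedFace P w) := by
    have : exposedFace P w = P ∩ ⋂ y ∈ P, {x | inner ℝ w y ≤ inner ℝ w x} := by
      ext x; simp [exposedFace]
    rw [this]
    apply hcpt.inter_right
    apply isClosed_biInter
    intro y _
    exact isClosed_le continuous_const (by fun_prop)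
  have hFn : (exposedFace P w).Nonempty := by
    obtain ⟨x, hx, hm⟩ := hcpt.exists_isMaxOn hne
      (f := fun y => inner ℝ w y) (by fun_prop)
    exact ⟨x, hx, fun y hy => hm hy⟩
  obtain ⟨a, haF, hamin⟩ := hFc.exists_isMinOn hFn (f := fun y => inner ℝ (b 0) y) (by fun_prop)
  obtain ⟨a2, ha2F, ha2max⟩ := hFc.exists_isMaxOn hFn (f := fun y => inner ℝ (b 0) y)
    (by fun_prop)
  have hamin : ∀ y ∈ exposedFace P w, inner ℝ (b 0) a ≤ inner ℝ (b 0) y := fun y hy => hamin hy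
  have ha2max : ∀ y ∈ exposedFace P w, inner ℝ (b 0) y ≤ inner ℝ (b 0) a2 :=
    fun y hy => ha2max hy
  -- points of the face
  have hdecomp : ∀ x ∈ exposedFace P w, x = a + (inner ℝ (b 0) x - inner ℝ (b 0) a) • b 0 := by
    intro x hx
    apply b.repr.injective
    ext i
    rw [b.repr_apply_apply, b.repr_apply_apply]
    have hwx : inner ℝ w x = inner ℝ w a := le_antisymm (haF.2 x hx.1) (hx.2 a haF.1)
    have h1x := hface x hx a haF
    fin_cases i
    · simp [inner_add_right, inner_smul_right]
    · simpa [inner_add_right, inner_smul_right, horth] using h1x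
    · simpa [inner_add_right, inner_smul_right, horth, hw] using hwx
  set l := inner ℝ (b 0) a2 - inner ℝ (b 0) a with hl
  have hl0 : 0 ≤ l := by have := hamin a2 ha2F; linarith
  have ha2 : a2 = a + l • b 0 := hdecomp a2 ha2F
  have hinF : ∀ s : ℝ, a + s • b 0 ∈ P → a + s • b 0 ∈ exposedFace P w := by
    intro s hs
    refine ⟨hs, fun y hy => ?_⟩
    rw [inner_add_right, inner_smul_right, h20]
    simpa using haF.2 y hy
  have hseg : ∀ s : ℝ, a + s • b 0 ∈ P ↔ s ∈ Set.Icc 0 l := by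
    intro s
    constructor
    · intro hs
      have h1 := hamin _ (hinF s hs)
      have h2 := ha2max _ (hinF s hs)
      rw [inner_add_right, inner_smul_right, h00] at h1 h2
      constructor <;> linarith
    · rintro ⟨h0, h1⟩
      rcases hl0.eq_or_lt with h2 | h2
      · have : s = 0 := by linarith
        subst this
        simpa using haF.1
      · have := hconv haF.1 ha2F.1 (a := 1 - s / l) (b := s / l)
          (by rw [sub_nonneg, div_le_one h2]; exact h1) (by positivity) (by ring)
        convert this using 1
        rw [ha2, smul_add, smul_smul, div_mul_cancel₀ _ h2.ne', sub_smul, one_smul]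
        abel
  have hFeq : exposedFace P w = (fun s : ℝ => a + s • b 0) '' Set.Icc 0 l := by
    ext x
    constructor
    · intro hx
      have hd := hdecomp x hx
      refine ⟨inner ℝ (b 0) x - inner ℝ (b 0) a, ?_, hd.symm⟩
      rw [← hseg, ← hd]
      exact hx.1
    · rintro ⟨s, hs, rfl⟩
      exact hinF s ((hseg s).2 hs)
  -- slopes
  let T : E3 → ℝ := fun y => inner ℝ w a - inner ℝ w y
  let X : E3 → ℝ := fun y => inner ℝ (b 1) y - inner ℝ (b 1) a
  have hT0 : ∀ y ∈ P, 0 ≤ T y := fun y hy => sub_nonneg.2 (haF.2 y hy)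
  have hTX : ∀ y ∈ P, T y = 0 → X y = 0 := by
    intro y hy h0
    have h0 : inner ℝ w a - inner ℝ w y = 0 := h0
    have hyF : y ∈ exposedFace P w := by
      refine ⟨hy, fun z hz => ?_⟩
      have := haF.2 z hz
      linarith
    have := hface y hyF a haF
    simp [X, this]
  obtain ⟨S, hS⟩ := hP
  have hSP : ∀ v ∈ S, v ∈ P := by
    intro v hv
    rw [hS]
    exact subset_convexHull ℝ _ (by exact_mod_cast hv)
  -- halfspace criterion
  have half : ∀ γ δ : ℝ, (∀ v ∈ S, 0 ≤ γ * T v + δ * X v) → ∀ y ∈ P, 0 ≤ γ * T y + δ * X y := by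
    intro γ δ hv y hy
    rw [hS] at hy
    have hcv : Convex ℝ {y | 0 ≤ γ * T y + δ * X y} := by
      intro y hy z hz r s hr hs hrs
      simp only [Set.mem_ofPred_eq, T, X, inner_add_right, inner_smul_right] at hy hz ⊢
      have hs' : s = 1 - r := by linarith
      have := add_nonneg (mul_nonneg hr hy) (mul_nonneg hs hz)
      subst hs'
      linarith
    exact convexHull_min (fun v hv' => hv v (by exact_mod_cast hv')) hcv hy
  classical
  set S' := S.filter (fun v => 0 < T v) with hS'
  have hS'ne : S'.Nonempty := by
    by_contra hcon
    rw [Finset.not_nonempty_iff_eq_empty] at hcon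
    have h1 : ∀ v ∈ S, T v ≤ 0 := by
      intro v hv
      by_contra hlt
      have : v ∈ S' := Finset.mem_filter.2 ⟨hv, not_le.1 hlt⟩
      rw [hcon] at this
      simp at this
    have h2 := half (-1) 0 (fun v hv => by have := h1 v hv; linarith)
    have h3 : w = 0 := by
      apply not_flat hInt w (inner ℝ w a)
      intro y hy
      have h4 := h2 y hy
      have h5 := hT0 y hy
      have h6 : T y = 0 := by linarith
      have h6 : inner ℝ w a - inner ℝ w y = 0 := h6
      linarith
    have h4 : inner ℝ w w = (1 : ℝ) := by simp [hw]
    rw [h3] at h4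
    simp at h4
  obtain ⟨v1, hv1, hmin⟩ := S'.exists_min_image (fun v => X v / T v) hS'ne
  obtain ⟨v2, hv2, hmax⟩ := S'.exists_max_image (fun v => X v / T v) hS'ne
  have hv1' := Finset.mem_filter.1 hv1
  have hv2' := Finset.mem_filter.1 hv2
  set α := X v1 / T v1 with hα
  set β := X v2 / T v2 with hβ
  have hlow : ∀ y ∈ P, α * T y ≤ X y := by
    intro y hy
    have := half (-α) 1 (fun v hv => ?_) y hy
    · linarith
    · rcases (hT0 v (hSP v hv)).eq_or_lt with h0 | h0
      · rw [hTX v (hSP v hv) h0.symm, ← h0]; simp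
      · have := hmin v (Finset.mem_filter.2 ⟨hv, h0⟩)
        rw [le_div_iff₀ h0] at this
        linarith
  have hupp : ∀ y ∈ P, X y ≤ β * T y := by
    intro y hy
    have := half β (-1) (fun v hv => ?_) y hy
    · linarith
    · rcases (hT0 v (hSP v hv)).eq_or_lt with h0 | h0
      · rw [hTX v (hSP v hv) h0.symm, ← h0]; simp
      · have := hmax v (Finset.mem_filter.2 ⟨hv, h0⟩)
        rw [div_le_iff₀ h0] at this
        linarith
  have hle : α ≤ β := hmin v2 hv2
  have hlt : α < β := by
    rcases hle.eq_or_lt with heq | hlt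
    · exfalso
      have h3 : b 1 + α • w = 0 := by
        apply not_flat hInt _ (inner ℝ (b 1) a + α * inner ℝ w a)
        intro y hy
        have h4 := hlow y hy
        have h5 := hupp y hy
        rw [← heq] at h5
        have h6 : α * (inner ℝ w a - inner ℝ w y) = inner ℝ (b 1) y - inner ℝ (b 1) a :=
          le_antisymm h4 h5
        rw [inner_add_left, inner_smul_left]
        simp only [conj_trivial]
        linarith
      have h4 : inner ℝ (b 1) (b 1 + α • w) = (1 : ℝ) := by
        simp [hw, inner_add_right, inner_smul_right, horth]
      rw [h3] at h4
      simp at h4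
    · exact hlt
  have hTk : ∀ k : F3, T (a + coordE b 1 one_ne_zero k) = k.2.1 := by
    intro k
    simp only [T, inner_add_right, hw, inner2]
    ring
  have hXk : ∀ k : F3, X (a + coordE b 1 one_ne_zero k) = k.2.2 := by
    intro k
    simp only [X, inner_add_right, inner1]
    ring
  have hvert : ∀ v ∈ S, ∃ s : ℝ,
      ((s, T v, X v) : F3) ∈ {k | a + coordE b 1 one_ne_zero k ∈ P} := by
    intro v hv
    obtain ⟨k, hk⟩ := (coordE b 1 one_ne_zero).surjective (v - a)
    have hk' : a + coordE b 1 one_ne_zero k = v := by rw [hk]; abel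
    refine ⟨k.1, ?_⟩
    rw [← hk', hTk, hXk]
    show a + coordE b 1 one_ne_zero k ∈ P
    rw [hk']
    exact hSP v hv
  refine ⟨a, l, α, β, ⟨?_, ?_, hl0, hlt, ?_, ?_, ?_, ?_⟩, hFeq⟩
  · intro k hk m hm r s hr hs hrs
    have := hconv hk hm hr hs hrs
    show _ ∈ P
    convert this using 1
    rw [map_add, map_smul, map_smul, smul_add, smul_add]
    have : a = r • a + s • a := by rw [← add_smul, hrs, one_smul]
    nth_rewrite 1 [this]
    abel
  · have : {k | a + coordE b 1 one_ne_zero k ∈ P} =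
        (fun y => (coordE b 1 one_ne_zero).symm (y - a)) '' P := by
      ext k
      constructor
      · intro hk
        exact ⟨_, hk, by simp⟩
      · rintro ⟨y, hy, rfl⟩
        simpa using hy
    rw [this]
    exact hcpt.image (by fun_prop)
  · intro k hk
    have h1 := hT0 _ hk
    have h2 := hlow _ hk
    have h3 := hupp _ hk
    rw [hTk] at h1 h2 h3
    rw [hXk] at h2 h3
    exact ⟨h1, h2, h3⟩
  · intro s
    rw [← hseg s]
    simp [coordE_apply]
  · obtain ⟨s, hs⟩ := hvert v1 hv1'.1
    refine ⟨s, T v1, hv1'.2, ?_⟩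
    rwa [hα, div_mul_cancel₀ _ hv1'.2.ne']
  · obtain ⟨s, hs⟩ := hvert v2 hv2'.1
    refine ⟨s, T v2, hv2'.2, ?_⟩
    rwa [hβ, div_mul_cancel₀ _ hv2'.2.ne']

lemma sub_body_subset {P P' : Set E3} (hP : IsCompact P) (hc : Convex ℝ P) (hP' : IsCompact P')
    (hInt : (interior P).Nonempty) (hcov : covariogram P = covariogram P') :
    P + -P ⊆ P' + -P' := by
  have hcl : IsClosed (P' + -P') := (hP'.add hP'.neg).isClosed
  have h1 : interior P + -interior P ⊆ P' + -P' := by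
    rintro _ ⟨y, hy, z, hz, rfl⟩
    have hpos : covariogram P (y + z) ≠ 0 := by
      unfold covariogram
      rw [ENNReal.toReal_ne_zero]
      constructor
      · have hopen : IsOpen (interior P ∩ ((fun x => (-(y + z)) + x) ⁻¹' interior P)) :=
          isOpen_interior.inter (isOpen_interior.preimage (by fun_prop))
        have hne : (interior P ∩ ((fun x => (-(y + z)) + x) ⁻¹' interior P)).Nonempty := by
          refine ⟨y, hy, ?_⟩
          have : -z ∈ interior P := hz
          simpa using this
        have hpos := hopen.measure_pos volume hne
        refine (hpos.trans_le (measure_mono ?_)).ne'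
        rintro x ⟨hx, hx2⟩
        exact ⟨interior_subset hx, _, interior_subset hx2, by simp only; abel⟩
      · exact ((measure_mono Set.inter_subset_left).trans_lt hP.measure_lt_top).ne
    rw [hcov] at hpos
    unfold covariogram at hpos
    rw [ENNReal.toReal_ne_zero] at hpos
    obtain ⟨x, hx, u, hu, hxu⟩ := nonempty_of_measure_ne_zero hpos.1
    refine ⟨x, hx, -u, by simpa using hu, ?_⟩
    simp only at hxu ⊢
    rw [← hxu]
    abel
  have h2 : P ⊆ closure (interior P) := by
    rw [hc.closure_interior_eq_closure_of_nonempty_interior hInt]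
    exact subset_closure
  calc P + -P ⊆ closure (interior P) + closure (-interior P) := by
        apply Set.add_subset_add h2
        intro x hx
        have h3 := map_mem_closure continuous_neg (h2 hx) (t := -interior P)
          (fun y hy => by simpa using hy)
        simpa using h3
    _ ⊆ closure (interior P + -interior P) := by
        rintro _ ⟨x, hx, y, hy, rfl⟩
        exact map_mem_closure₂ continuous_add hx hy (fun a ha b hb => Set.add_mem_add ha hb)
    _ ⊆ P' + -P' := hcl.closure_subset_iff.2 h1

lemma exposedFace_add (P R : Set E3) (w : E3) :
    exposedFace (P + R) w = exposedFace P w + exposedFace R w := by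
  ext x
  constructor
  · rintro ⟨⟨p, hp, r, hr, rfl⟩, h⟩
    refine ⟨p, ⟨hp, fun y hy => ?_⟩, r, ⟨hr, fun y hy => ?_⟩, rfl⟩
    · have := h _ (Set.add_mem_add hy hr)
      simp only [inner_add_right] at this
      linarith
    · have := h _ (Set.add_mem_add hp hy)
      simp only [inner_add_right] at this
      linarith
  · rintro ⟨p, hp, r, hr, rfl⟩
    refine ⟨Set.add_mem_add hp.1 hr.1, ?_⟩
    rintro _ ⟨y, hy, z, hz, rfl⟩
    have h1 := hp.2 y hy
    have h2 := hr.2 z hz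
    simp only [inner_add_right]
    linarith

lemma exposedFace_neg (P : Set E3) (w : E3) : exposedFace P (-w) = -exposedFace (-P) w := by
  ext x
  simp only [exposedFace, Set.mem_neg, Set.mem_ofPred_eq, neg_neg, inner_neg_left, inner_neg_right]
  refine and_congr_right fun _ => ⟨fun h y hy => ?_, fun h y hy => ?_⟩
  · have := h _ hy
    simpa using this
  · have := h (-y) (by simpa using hy)
    simpa using this

lemma intrinsicInterior_neg' (F : Set E3) : intrinsicInterior ℝ (-F) = -intrinsicInterior ℝ F := by
  have := AffineIsometry.intrinsicInterior_image
    (LinearIsometryEquiv.neg ℝ (E := E3)).toLinearIsometry.toAffineIsometry F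
  rw [← Set.image_neg_eq_neg, ← Set.image_neg_eq_neg]
  exact this

lemma supportCone_neg (P F : Set E3) : supportCone (-P) (-F) = -supportCone P F := by
  ext v
  simp only [supportCone, Set.mem_neg, Set.mem_ofPred_eq, intrinsicInterior_neg']
  constructor
  · rintro ⟨x, hx, y, hy, μ, hμ, rfl⟩
    exact ⟨-x, hx, -y, hy, μ, hμ, by module⟩
  · rintro ⟨x, hx, y, hy, μ, hμ, h⟩
    refine ⟨-x, by simpa using hx, -y, by simpa using hy, μ, hμ, ?_⟩
    rw [← neg_neg v, h]
    module

/-- Affine isometric parametrization of a line. -/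
lemma isometry_line (a u : E3) (hu : ‖u‖ = 1) : Isometry (fun s : ℝ => a + s • u) := by
  apply Isometry.of_dist_eq
  intro x y
  rw [dist_add_left, dist_eq_norm, ← sub_smul, norm_smul, hu, mul_one, Real.dist_eq,
    Real.norm_eq_abs]

lemma hausdorff_seg (a u : E3) (hu : ‖u‖ = 1) (l : ℝ) :
    μH[1] ((fun s : ℝ => a + s • u) '' Set.Icc 0 l) = ENNReal.ofReal l := by
  rw [(isometry_line a u hu).hausdorffMeasure_image (Or.inl zero_le_one), hausdorffMeasure_real]
  simp

lemma vectorSpan_seg (a u : E3) (l : ℝ) (hl : 0 < l) :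
    vectorSpan ℝ ((fun s : ℝ => a + s • u) '' Set.Icc 0 l) = Submodule.span ℝ {u} := by
  apply le_antisymm
  · rw [vectorSpan_def, Submodule.span_le]
    rintro _ ⟨_, ⟨s, _, rfl⟩, _, ⟨t, _, rfl⟩, rfl⟩
    simp only [vsub_eq_sub]
    apply Submodule.mem_span_singleton.2
    exact ⟨s - t, by module⟩
  · rw [Submodule.span_singleton_le_iff_mem]
    have h := vsub_mem_vectorSpan ℝ (s := (fun s : ℝ => a + s • u) '' Set.Icc 0 l)
      (Set.mem_image_of_mem _ (Set.right_mem_Icc.2 hl.le))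
      (Set.mem_image_of_mem _ (Set.left_mem_Icc.2 hl.le))
    have h2 := Submodule.smul_mem _ l⁻¹ h
    convert h2 using 1
    simp only [vsub_eq_sub, zero_smul, add_zero, add_sub_cancel_left, smul_smul]
    rw [inv_mul_cancel₀ hl.ne', one_smul]

lemma intrinsicInterior_seg (a u : E3) (hu : ‖u‖ = 1) (l : ℝ) (hl : 0 < l) :
    intrinsicInterior ℝ ((fun s : ℝ => a + s • u) '' Set.Icc 0 l) =
      (fun s : ℝ => a + s • u) '' Set.Ioo 0 l := by
  have h1 : intrinsicInterior ℝ (Set.Icc (0 : ℝ) l) = Set.Ioo 0 l := by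
    have hspan : affineSpan ℝ (Set.Icc (0 : ℝ) l) = ⊤ := by
      apply affineSpan_eq_top_of_nonempty_interior
      rw [(convex_Icc (0 : ℝ) l).convexHull_eq, interior_Icc]
      exact Set.nonempty_Ioo.2 hl
    apply Set.Subset.antisymm
    · intro x hx
      rw [← interior_Icc, mem_interior_iff_mem_nhds]
      obtain ⟨y, hy, rfl⟩ := mem_intrinsicInterior.1 hx
      have hopen : IsOpen (Subtype.val '' interior (Subtype.val ⁻¹' Set.Icc (0 : ℝ) l :
          Set (affineSpan ℝ (Set.Icc (0 : ℝ) l)))) := by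
        apply IsOpen.isOpenMap_subtype_val _ _ isOpen_interior
        rw [hspan]
        simp
      apply Filter.mem_of_superset (hopen.mem_nhds (Set.mem_image_of_mem _ hy))
      rintro _ ⟨z, hz, rfl⟩
      have hz' : z ∈ (Subtype.val ⁻¹' Set.Icc (0 : ℝ) l :
          Set (affineSpan ℝ (Set.Icc (0 : ℝ) l))) := interior_subset hz
      exact hz'
    · rw [← interior_Icc]
      exact interior_subset_intrinsicInterior
  let f : ℝ →ᵃⁱ[ℝ] E3 :=
    { toFun := fun s => a + s • u
      linear := LinearMap.toSpanSingleton ℝ E3 u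
      map_vadd' := by
        intro p v
        simp only [vadd_eq_add, LinearMap.toSpanSingleton_apply]
        module
      norm_map := by
        intro x
        simp [norm_smul, hu] }
  have := AffineIsometry.intrinsicInterior_image f (Set.Icc 0 l)
  rw [h1] at this
  exact this

lemma supportCone_good (b : OrthonormalBasis (Fin 3) ℝ E3) (P F : Set E3) (a : E3) (l α β : ℝ)
    (h : Good {k | a + coordE b 1 one_ne_zero k ∈ P} l α β) (hl : 0 < l)
    (hF : F = (fun s : ℝ => a + s • b 0) '' Set.Icc 0 l) :
    supportCone P F = coordE b 1 one_ne_zero '' {p | p.2 ∈ planeCone α β} := by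
  have hs : ∀ s : ℝ, s • b 0 = coordE b 1 one_ne_zero (s, 0, 0) := by
    intro s; simp [coordE_apply]
  ext v
  unfold supportCone
  rw [hF, intrinsicInterior_seg _ _ (b.orthonormal.1 0) _ hl]
  constructor
  · rintro ⟨_, ⟨s, hs0, rfl⟩, y, hy, μ, hμ, rfl⟩
    obtain ⟨k, hk⟩ := (coordE b 1 one_ne_zero).surjective (y - a)
    have hk' : y = a + coordE b 1 one_ne_zero k := by rw [hk]; abel
    subst hk'
    refine ⟨μ • (k - (s, 0, 0)), ?_, ?_⟩
    · obtain ⟨h1, h2, h3⟩ := h.sub k hy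
      simp only [Set.mem_ofPred_eq, planeCone, Prod.smul_snd, Prod.snd_sub, Prod.smul_fst,
        Prod.fst_sub, smul_eq_mul, sub_zero]
      refine ⟨mul_nonneg hμ h1, ?_, ?_⟩
      · have := mul_le_mul_of_nonneg_left h2 hμ
        linarith
      · have := mul_le_mul_of_nonneg_left h3 hμ
        linarith
    · rw [map_smul, map_sub]
      simp only [hs]
      congr 1
      abel
  · rintro ⟨⟨s, t, x⟩, hp, rfl⟩
    have hmid : l / 2 ∈ Set.Ioo 0 l := ⟨by linarith, by linarith⟩
    obtain ⟨ε, hε, hε0⟩ := ((h.eventually_mem hmid s hp).and self_mem_nhdsWithin).exists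
    have hε0 : 0 < ε := hε0
    refine ⟨_, Set.mem_image_of_mem _ hmid, _, hε, ε⁻¹, by positivity, ?_⟩
    simp only [hs]
    rw [add_sub_add_left_eq_sub, ← map_sub, ← map_smul]
    congr 1
    ext <;> simp [hε0.ne']

lemma segI_zero (l : ℝ) : segI 0 l = l := by simp [segI]

lemma segI_pos_eq (τ l : ℝ) (hτ : 0 < τ) : segI τ l = (Real.exp (τ * l) - 1) / τ := by
  unfold segI
  rw [intervalIntegral.integral_eq_sub_of_hasDerivAt (f := fun x => Real.exp (τ * x) / τ)]
  · simp; ring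
  · intro x _
    have : HasDerivAt (fun x => Real.exp (τ * x) / τ) (Real.exp (τ * x) * (τ * 1) / τ) x :=
      ((((hasDerivAt_id x).const_mul τ)).exp).div_const τ
    rw [mul_one, mul_div_cancel_right₀ _ hτ.ne'] at this
    exact this
  · apply Continuous.intervalIntegrable
    fun_prop

lemma lengths_eq (l l1 l2 M M' : ℝ) (hl : 0 < l) (h1 : 0 ≤ l1) (h2 : 0 ≤ l2)
    (hsum : l1 + l2 = l + l) (hM : 0 < M)
    (h : ∀ τ : ℝ, segI τ l * segI τ l * M = segI τ l1 * segI τ l2 * M') :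
    l1 = l ∧ l2 = l ∧ M = M' := by
  have h0 := h 0
  simp only [segI_zero] at h0
  have hne : l * l * M ≠ 0 := by positivity
  have hl1 : 0 < l1 := lt_of_le_of_ne h1 (by rintro rfl; apply hne; rw [h0]; ring)
  have hl2 : 0 < l2 := lt_of_le_of_ne h2 (by rintro rfl; apply hne; rw [h0]; ring)
  have hexp : ∀ c : ℝ, 0 < c → Filter.Tendsto (fun τ : ℝ => 1 - Real.exp (-(τ * c)))
      Filter.atTop (nhds 1) := by
    intro c hc
    have : Filter.Tendsto (fun τ : ℝ => Real.exp (-(τ * c))) Filter.atTop (nhds 0) :=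
      Real.tendsto_exp_neg_atTop_nhds_zero.comp
        (Filter.tendsto_id.atTop_mul_const hc)
    simpa using tendsto_const_nhds.sub this
  have e1 : ∀ τ c : ℝ, 0 < τ → segI τ c = Real.exp (τ * c) * (1 - Real.exp (-(τ * c))) / τ := by
    intro τ c hτ
    rw [segI_pos_eq τ c hτ, mul_sub, ← Real.exp_add]
    simp
  have e2 : ∀ τ : ℝ, 0 < τ → (1 - Real.exp (-(τ * l))) * (1 - Real.exp (-(τ * l))) * M =
      (1 - Real.exp (-(τ * l1))) * (1 - Real.exp (-(τ * l2))) * M' := by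
    intro τ hτ
    have h3 := h τ
    rw [e1 τ l hτ, e1 τ l1 hτ, e1 τ l2 hτ] at h3
    have h4 : Real.exp (τ * l1) * Real.exp (τ * l2) = Real.exp (τ * l) * Real.exp (τ * l) := by
      rw [← Real.exp_add, ← Real.exp_add, ← mul_add, hsum, mul_add]
    have hE : Real.exp (τ * l) * Real.exp (τ * l) ≠ 0 := by positivity
    field_simp at h3
    apply mul_left_cancel₀ hE
    linear_combination h3 + ((1 - Real.exp (-(τ * l1))) * (1 - Real.exp (-(τ * l2))) * M') * h4
  have hMM : M = M' := by
    have t1 := (((hexp l hl).mul (hexp l hl)).mul_const M)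
    have t2 := (((hexp l1 hl1).mul (hexp l2 hl2)).mul_const M')
    have t3 := t2.congr' (f₂ := fun τ : ℝ =>
        (1 - Real.exp (-(τ * l))) * (1 - Real.exp (-(τ * l))) * M) (by
      filter_upwards [Filter.eventually_gt_atTop 0] with τ hτ
      exact (e2 τ hτ).symm)
    have := tendsto_nhds_unique t1 t3
    simpa using this
  subst hMM
  have h5 : l * l = l1 * l2 := mul_right_cancel₀ hM.ne' h0
  have h6 : (l1 - l2) ^ 2 = 0 := by
    have : l1 + l2 = l + l := hsum
    linear_combination (l1 + l2 + 2 * l) * this + 4 * h5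
  have h7 : l1 - l2 = 0 := by simpa using h6
  refine ⟨by linarith, by linarith, rfl⟩

lemma quartic_zero (q0 c0 c1 c2 c3 c4 : ℝ) (hq0 : 0 < q0)
    (h : ∀ q ∈ Set.Ioo 0 q0, c0 + c1 * q + c2 * q ^ 2 + c3 * q ^ 3 + c4 * q ^ 4 = 0) :
    c0 = 0 ∧ c1 = 0 ∧ c2 = 0 ∧ c3 = 0 ∧ c4 = 0 := by
  have hz : (Polynomial.C c0 + Polynomial.C c1 * Polynomial.X + Polynomial.C c2 * Polynomial.X ^ 2
      + Polynomial.C c3 * Polynomial.X ^ 3 + Polynomial.C c4 * Polynomial.X ^ 4 :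
      Polynomial ℝ) = 0 := by
    apply Polynomial.eq_zero_of_infinite_isRoot
    apply (Set.Ioo_infinite hq0).mono
    intro q hq
    have := h q hq
    simpa [Polynomial.IsRoot] using this
  have hc : ∀ n, Polynomial.coeff (Polynomial.C c0 + Polynomial.C c1 * Polynomial.X +
      Polynomial.C c2 * Polynomial.X ^ 2
      + Polynomial.C c3 * Polynomial.X ^ 3 + Polynomial.C c4 * Polynomial.X ^ 4 :
      Polynomial ℝ) n = 0 := by
    intro n; rw [hz]; simp
  have g0 := hc 0
  have g1 := hc 1
  have g2 := hc 2
  have g3 := hc 3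
  have g4 := hc 4
  simp [Polynomial.coeff_X, Polynomial.coeff_C, Polynomial.coeff_X_pow] at g0 g1 g2 g3 g4
  exact ⟨g0, g1, g2, g3, g4⟩

lemma sorted2 {x1 x2 y1 y2 : ℝ} (hx : x1 ≤ x2) (hy : y1 ≤ y2)
    (e1 : x1 + x2 = y1 + y2) (e2 : x1 * x2 = y1 * y2) : x1 = y1 ∧ x2 = y2 := by
  have h : (x1 - y1) * (x1 - y2) = 0 := by linear_combination (x1) * e1 - e2
  rcases mul_eq_zero.1 h with h | h
  · exact ⟨by linarith, by linarith⟩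
  · exact ⟨by linarith, by linarith⟩

lemma sorted3 {x1 x2 x3 y1 y2 y3 : ℝ} (hx : x1 ≤ x2) (hx' : x2 ≤ x3) (hy : y1 ≤ y2)
    (hy' : y2 ≤ y3) (e1 : x1 + x2 + x3 = y1 + y2 + y3)
    (e2 : x1 * x2 + x1 * x3 + x2 * x3 = y1 * y2 + y1 * y3 + y2 * y3)
    (e3 : x1 * x2 * x3 = y1 * y2 * y3) : x1 = y1 ∧ x2 = y2 ∧ x3 = y3 := by
  have h : (x1 - y1) * ((x1 - y2) * (x1 - y3)) = 0 := by
    linear_combination x1 ^ 2 * e1 - x1 * e2 + e3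
  have h' : (y1 - x1) * ((y1 - x2) * (y1 - x3)) = 0 := by
    linear_combination -y1 ^ 2 * e1 + y1 * e2 - e3
  have hle : y1 ≤ x1 := by
    rcases mul_eq_zero.1 h with h | h
    · linarith
    rcases mul_eq_zero.1 h with h | h <;> linarith
  have hle' : x1 ≤ y1 := by
    rcases mul_eq_zero.1 h' with h | h
    · linarith
    rcases mul_eq_zero.1 h with h | h <;> linarith
  have heq : x1 = y1 := le_antisymm hle' hle
  subst heq
  exact ⟨rfl, sorted2 hx' hy' (by linarith) (by linear_combination e2 - x1 * e1)⟩

lemma sorted4 {x1 x2 x3 x4 y1 y2 y3 y4 : ℝ} (hx : x1 ≤ x2) (hx' : x2 ≤ x3) (hx'' : x3 ≤ x4)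
    (hy : y1 ≤ y2) (hy' : y2 ≤ y3) (hy'' : y3 ≤ y4)
    (e1 : x1 + x2 + x3 + x4 = y1 + y2 + y3 + y4)
    (e2 : x1 * x2 + x1 * x3 + x1 * x4 + x2 * x3 + x2 * x4 + x3 * x4 =
      y1 * y2 + y1 * y3 + y1 * y4 + y2 * y3 + y2 * y4 + y3 * y4)
    (e3 : x1 * x2 * x3 + x1 * x2 * x4 + x1 * x3 * x4 + x2 * x3 * x4 =
      y1 * y2 * y3 + y1 * y2 * y4 + y1 * y3 * y4 + y2 * y3 * y4)
    (e4 : x1 * x2 * x3 * x4 = y1 * y2 * y3 * y4) : x1 = y1 ∧ x2 = y2 ∧ x3 = y3 ∧ x4 = y4 := by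
  have h : (x1 - y1) * ((x1 - y2) * ((x1 - y3) * (x1 - y4))) = 0 := by
    linear_combination x1 ^ 3 * e1 - x1 ^ 2 * e2 + x1 * e3 - e4
  have h' : (y1 - x1) * ((y1 - x2) * ((y1 - x3) * (y1 - x4))) = 0 := by
    linear_combination -y1 ^ 3 * e1 + y1 ^ 2 * e2 - y1 * e3 + e4
  have hle : y1 ≤ x1 := by
    rcases mul_eq_zero.1 h with h | h
    · linarith
    rcases mul_eq_zero.1 h with h | h
    · linarith
    rcases mul_eq_zero.1 h with h | h <;> linarith
  have hle' : x1 ≤ y1 := by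
    rcases mul_eq_zero.1 h' with h | h
    · linarith
    rcases mul_eq_zero.1 h with h | h
    · linarith
    rcases mul_eq_zero.1 h with h | h <;> linarith
  have heq : x1 = y1 := le_antisymm hle' hle
  subst heq
  exact ⟨rfl, sorted3 hx' hx'' hy' hy'' (by linarith) (by linear_combination e2 - x1 * e1)
    (by linear_combination e3 - x1 * e2 + x1 ^ 2 * e1)⟩

/-- The elementary symmetric functions and the product of widths of two intervals agree. -/
structure SameData (α β γ δ α' β' γ' δ' : ℝ) : Prop where
  k : (β - α) * (δ - γ) = (β' - α') * (δ' - γ')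
  e1 : α + β + γ + δ = α' + β' + γ' + δ'
  e2 : α * β + α * γ + α * δ + β * γ + β * δ + γ * δ =
    α' * β' + α' * γ' + α' * δ' + β' * γ' + β' * δ' + γ' * δ'
  e3 : α * β * γ + α * β * δ + α * γ * δ + β * γ * δ =
    α' * β' * γ' + α' * β' * δ' + α' * γ' * δ' + β' * γ' * δ'
  e4 : α * β * γ * δ = α' * β' * γ' * δ'

lemma SameData.swap {α β γ δ α' β' γ' δ' : ℝ} (h : SameData α β γ δ α' β' γ' δ') :
    SameData γ δ α β α' β' γ' δ' :=
  ⟨by linear_combination h.k, by linear_combination h.e1, by linear_combination h.e2,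
    by linear_combination h.e3, by linear_combination h.e4⟩

lemma SameData.symm {α β γ δ α' β' γ' δ' : ℝ} (h : SameData α β γ δ α' β' γ' δ') :
    SameData α' β' γ' δ' α β γ δ :=
  ⟨h.k.symm, h.e1.symm, h.e2.symm, h.e3.symm, h.e4.symm⟩

lemma pairing_core {α β γ δ α' β' γ' δ' : ℝ} (h : SameData α β γ δ α' β' γ' δ')
    (h2 : γ < δ) (h4 : γ ≤ β) (h2' : γ' < δ') (h4' : γ' ≤ β')
    (hw : α ≤ γ) (hw' : α' ≤ γ') :
    (α = α' ∧ β = β' ∧ γ = γ' ∧ δ = δ') ∨ (α = γ' ∧ β = δ' ∧ γ = α' ∧ δ = β') := by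
  obtain ⟨k, e1, e2, e3, e4⟩ := h
  have cross : α = α' → γ = γ' → β = δ' → δ = β' →
      (α = α' ∧ β = β' ∧ γ = γ' ∧ δ = δ') ∨ (α = γ' ∧ β = δ' ∧ γ = α' ∧ δ = β') := by
    rintro rfl rfl rfl rfl
    have : (β - δ) * (α - γ) = 0 := by linear_combination k
    rcases mul_eq_zero.1 this with h | h
    · left
      exact ⟨rfl, by linarith, rfl, by linarith⟩
    · right
      exact ⟨by linarith, rfl, by linarith, rfl⟩
  rcases le_total β δ with hb | hb <;> rcases le_total β' δ' with hb' | hb'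
  · obtain ⟨g1, g2, g3, g4⟩ := sorted4 hw h4 hb hw' h4' hb' (by linarith)
      (by linear_combination e2) (by linear_combination e3) (by linear_combination e4)
    exact Or.inl ⟨g1, g3, g2, g4⟩
  · obtain ⟨g1, g2, g3, g4⟩ := sorted4 hw h4 hb hw' h2'.le hb' (by linarith)
      (by linear_combination e2) (by linear_combination e3) (by linear_combination e4)
    exact cross g1 g2 g3 g4
  · obtain ⟨g1, g2, g3, g4⟩ := sorted4 hw h2.le hb hw' h4' hb' (by linarith)
      (by linear_combination e2) (by linear_combination e3) (by linear_combination e4)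
    exact cross g1 g2 g4 g3
  · obtain ⟨g1, g2, g3, g4⟩ := sorted4 hw h2.le hb hw' h2'.le hb' (by linarith)
      (by linear_combination e2) (by linear_combination e3) (by linear_combination e4)
    exact Or.inl ⟨g1, g4, g2, g3⟩

lemma pairing {α β γ δ α' β' γ' δ' : ℝ} (h : SameData α β γ δ α' β' γ' δ')
    (h1 : α < β) (h2 : γ < δ) (h3 : α ≤ δ) (h4 : γ ≤ β)
    (h1' : α' < β') (h2' : γ' < δ') (h3' : α' ≤ δ') (h4' : γ' ≤ β') :
    (α = α' ∧ β = β' ∧ γ = γ' ∧ δ = δ') ∨ (α = γ' ∧ β = δ' ∧ γ = α' ∧ δ = β') := by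
  rcases le_total α γ with hw | hw <;> rcases le_total α' γ' with hw' | hw'
  · exact pairing_core h h2 h4 h2' h4' hw hw'
  · have := pairing_core h.symm.swap.symm h2 h4 h1' h3' hw hw'
    tauto
  · have := pairing_core h.swap h1 h3 h2' h4' hw hw'
    tauto
  · have := pairing_core h.swap.symm.swap.symm h1 h3 h1' h3' hw hw'
    tauto

lemma sameData_of_eq {α β γ δ α' β' γ' δ' q0 : ℝ} (hq0 : 0 < q0)
    (h1 : α < β) (h2 : γ < δ)
    (hpos : ∀ q ∈ Set.Ioo 0 q0, 0 < 1 - q * α ∧ 0 < 1 - q * β ∧ 0 < 1 - q * γ ∧ 0 < 1 - q * δ ∧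
      0 < 1 - q * α' ∧ 0 < 1 - q * β' ∧ 0 < 1 - q * γ' ∧ 0 < 1 - q * δ')
    (h : ∀ q ∈ Set.Ioo 0 q0,
      (β - α) / ((1 - q * α) * (1 - q * β)) * ((δ - γ) / ((1 - q * γ) * (1 - q * δ))) =
      (β' - α') / ((1 - q * α') * (1 - q * β')) * ((δ' - γ') / ((1 - q * γ') * (1 - q * δ')))) :
    SameData α β γ δ α' β' γ' δ' := by
  set k := (β - α) * (δ - γ) with hk
  set k' := (β' - α') * (δ' - γ') with hk'
  have hkpos : 0 < k := mul_pos (by linarith) (by linarith)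
  obtain ⟨c0, c1, c2, c3, c4⟩ := quartic_zero q0 (k - k')
    (-(k * (α' + β' + γ' + δ')) + k' * (α + β + γ + δ))
    (k * (α' * β' + α' * γ' + α' * δ' + β' * γ' + β' * δ' + γ' * δ') -
      k' * (α * β + α * γ + α * δ + β * γ + β * δ + γ * δ))
    (-(k * (α' * β' * γ' + α' * β' * δ' + α' * γ' * δ' + β' * γ' * δ')) +
      k' * (α * β * γ + α * β * δ + α * γ * δ + β * γ * δ))
    (k * (α' * β' * γ' * δ') - k' * (α * β * γ * δ)) hq0 (by
      intro q hq
      obtain ⟨p1, p2, p3, p4, p5, p6, p7, p8⟩ := hpos q hq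
      have e := h q hq
      rw [div_mul_div_comm, div_mul_div_comm, div_eq_div_iff (by positivity) (by positivity)] at e
      rw [hk, hk']
      linear_combination e)
  have hkk : k = k' := by linarith
  rw [← hkk] at c1 c2 c3 c4
  refine ⟨hkk, ?_, ?_, ?_, ?_⟩ <;> apply mul_left_cancel₀ hkpos.ne' <;> linarith

lemma good_cross (b : OrthonormalBasis (Fin 3) ℝ E3) (P : Set E3) (a c : E3) (l m α β γ δ : ℝ)
    (h1 : Good {k | a + coordE b 1 one_ne_zero k ∈ P} l α β)
    (h2 : Good {k | c + coordE b 1 one_ne_zero k ∈ -P} m γ δ) : α ≤ δ ∧ γ ≤ β := by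
  have ha : a ∈ P := by
    have := (h1.line 0).2 ⟨le_rfl, h1.hl⟩
    have h0 : ((0, 0, 0) : F3) = 0 := rfl
    simpa [h0] using this
  have hc : c ∈ -P := by
    have := (h2.line 0).2 ⟨le_rfl, h2.hl⟩
    have h0 : ((0, 0, 0) : F3) = 0 := rfl
    simpa [h0] using this
  obtain ⟨k, hk⟩ := (coordE b 1 one_ne_zero).surjective (-c - a)
  have hk1 : a + coordE b 1 one_ne_zero k ∈ P := by
    rw [hk]; simpa using hc
  have hk2 : c + coordE b 1 one_ne_zero k ∈ -P := by
    rw [hk]; simpa using ha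
  obtain ⟨-, p1, p2⟩ := h1.sub k hk1
  obtain ⟨-, p3, p4⟩ := h2.sub k hk2
  obtain ⟨s, t, ht, hst⟩ := h1.left
  have hst' : a + coordE b 1 one_ne_zero (s, t, α * t) ∈ P := hst
  have hk3 : c + coordE b 1 one_ne_zero (k - (s, t, α * t)) ∈ -P := by
    rw [map_sub, hk, Set.mem_neg]
    convert hst' using 1
    abel
  have := (h2.sub _ hk3).1
  have hT : 0 < k.2.1 := by
    have h : 0 ≤ k.2.1 - t := this
    linarith
  constructor
  · exact le_of_mul_le_mul_right (p1.trans p4) hT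
  · exact le_of_mul_le_mul_right (p3.trans p2) hT

lemma segI_nonneg (τ l : ℝ) (hl : 0 ≤ l) : 0 ≤ segI τ l := by
  unfold segI
  exact intervalIntegral.integral_nonneg hl (fun s _ => (Real.exp_pos _).le)

lemma limit_eq (b : OrthonormalBasis (Fin 3) ℝ E3) (P P' : Set E3) (hP : IsCompact P)
    (hP' : IsCompact P') (hcov : covariogram P = covariogram P')
    (a c a' c' : E3) (hac : a + c = a' + c') (l m l' m' α β γ δ α' β' γ' δ' : ℝ)
    (h1 : Good {k | a + coordE b 1 one_ne_zero k ∈ P} l α β)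
    (h2 : Good {k | c + coordE b 1 one_ne_zero k ∈ -P} m γ δ)
    (h1' : Good {k | a' + coordE b 1 one_ne_zero k ∈ P'} l' α' β')
    (h2' : Good {k | c' + coordE b 1 one_ne_zero k ∈ -P'} m' γ' δ')
    (τ q : ℝ) (hq : 0 < q)
    (hpos : 0 < 1 - q * α ∧ 0 < 1 - q * β ∧ 0 < 1 - q * γ ∧ 0 < 1 - q * δ ∧
      0 < 1 - q * α' ∧ 0 < 1 - q * β' ∧ 0 < 1 - q * γ' ∧ 0 < 1 - q * δ') :
    segI τ l * segI τ m *
      ((β - α) / ((1 - q * α) * (1 - q * β)) * ((δ - γ) / ((1 - q * γ) * (1 - q * δ)))) =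
    segI τ l' * segI τ m' *
      ((β' - α') / ((1 - q * α') * (1 - q * β')) *
        ((δ' - γ') / ((1 - q * γ') * (1 - q * δ')))) := by
  obtain ⟨p1, p2, p3, p4, p5, p6, p7, p8⟩ := hpos
  have t1 := h1.tendsto τ q hq p1 p2
  have t2 := h2.tendsto τ q hq p3 p4
  have t3 := h1'.tendsto τ q hq p5 p6
  have t4 := h2'.tendsto τ q hq p7 p8
  have T := ENNReal.Tendsto.mul t1 (Or.inr (ENNReal.mul_ne_top ENNReal.ofReal_ne_top
    ENNReal.ofReal_ne_top)) t2 (Or.inr (ENNReal.mul_ne_top ENNReal.ofReal_ne_top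
    ENNReal.ofReal_ne_top))
  have T' := ENNReal.Tendsto.mul t3 (Or.inr (ENNReal.mul_ne_top ENNReal.ofReal_ne_top
    ENNReal.ofReal_ne_top)) t4 (Or.inr (ENNReal.mul_ne_top ENNReal.ofReal_ne_top
    ENNReal.ofReal_ne_top))
  have key : ∀ n : ℕ, _ = _ := fun n =>
    laplace_prod_eq P P' hP hP' hcov a c a' c' hac
      (coordE b (1 / ((n : ℝ) + 1)) (by positivity)) (expW τ q) (measurable_expW τ q)
      (expW_add τ q)
  have key2 := tendsto_nhds_unique T (T'.congr (fun n => by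
    have := key n
    simp only [coordE_eq_one b (1 / ((n : ℝ) + 1))] at this
    exact this.symm))
  have n1 := segI_nonneg τ l h1.hl
  have n2 := segI_nonneg τ m h2.hl
  have n3 := segI_nonneg τ l' h1'.hl
  have n4 := segI_nonneg τ m' h2'.hl
  have d1 : 0 ≤ (β - α) / ((1 - q * α) * (1 - q * β)) :=
    div_nonneg (sub_nonneg.2 h1.hαβ.le) (by positivity)
  have d2 : 0 ≤ (δ - γ) / ((1 - q * γ) * (1 - q * δ)) :=
    div_nonneg (sub_nonneg.2 h2.hαβ.le) (by positivity)
  have d3 : 0 ≤ (β' - α') / ((1 - q * α') * (1 - q * β')) :=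
    div_nonneg (sub_nonneg.2 h1'.hαβ.le) (by positivity)
  have d4 : 0 ≤ (δ' - γ') / ((1 - q * γ') * (1 - q * δ')) :=
    div_nonneg (sub_nonneg.2 h2'.hαβ.le) (by positivity)
  have key3 := congrArg ENNReal.toReal key2
  simp only [ENNReal.toReal_mul, ENNReal.toReal_ofReal n1, ENNReal.toReal_ofReal n2,
    ENNReal.toReal_ofReal n3, ENNReal.toReal_ofReal n4, ENNReal.toReal_ofReal d1,
    ENNReal.toReal_ofReal d2, ENNReal.toReal_ofReal d3, ENNReal.toReal_ofReal d4] at key3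
  linear_combination key3

lemma exists_q0 (α β γ δ α' β' γ' δ' : ℝ) : ∃ q0 : ℝ, 0 < q0 ∧ ∀ q ∈ Set.Ioo 0 q0,
    0 < 1 - q * α ∧ 0 < 1 - q * β ∧ 0 < 1 - q * γ ∧ 0 < 1 - q * δ ∧
      0 < 1 - q * α' ∧ 0 < 1 - q * β' ∧ 0 < 1 - q * γ' ∧ 0 < 1 - q * δ' := by
  set S := 1 + |α| + |β| + |γ| + |δ| + |α'| + |β'| + |γ'| + |δ'| with hS
  have hS0 : 0 < S := by positivity
  refine ⟨1 / S, by positivity, ?_⟩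
  rintro q ⟨hq, hq'⟩
  have h1 : q * S < 1 := by rwa [lt_div_iff₀ hS0] at hq'
  have h : ∀ x, |x| ≤ S → 0 < 1 - q * x := by
    intro x hx
    have : q * x ≤ q * S := mul_le_mul_of_nonneg_left ((le_abs_self x).trans hx) hq.le
    linarith
  have a1 := abs_nonneg α
  have a2 := abs_nonneg β
  have a3 := abs_nonneg γ
  have a4 := abs_nonneg δ
  have a5 := abs_nonneg α'
  have a6 := abs_nonneg β'
  have a7 := abs_nonneg γ'
  have a8 := abs_nonneg δ'
  refine ⟨?_, ?_, ?_, ?_, ?_, ?_, ?_, ?_⟩ <;> apply h <;> rw [hS] <;> linarith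

lemma data_eq (b : OrthonormalBasis (Fin 3) ℝ E3) (P P' : Set E3) (hP : IsCompact P)
    (hP' : IsCompact P') (hcov : covariogram P = covariogram P')
    (a c a' c' : E3) (hac : a + c = a' + c') (l l' m' α β γ δ α' β' γ' δ' : ℝ)
    (h1 : Good {k | a + coordE b 1 one_ne_zero k ∈ P} l α β)
    (h2 : Good {k | c + coordE b 1 one_ne_zero k ∈ -P} l γ δ)
    (h1' : Good {k | a' + coordE b 1 one_ne_zero k ∈ P'} l' α' β')
    (h2' : Good {k | c' + coordE b 1 one_ne_zero k ∈ -P'} m' γ' δ')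
    (hl : 0 < l) (hsum : l' + m' = l + l) :
    (l' = l ∧ m' = l) ∧ ((α = α' ∧ β = β' ∧ γ = γ' ∧ δ = δ') ∨
      (α = γ' ∧ β = δ' ∧ γ = α' ∧ δ = β')) := by
  obtain ⟨q0, hq0, hpos⟩ := exists_q0 α β γ δ α' β' γ' δ'
  have H : ∀ q ∈ Set.Ioo 0 q0, l' = l ∧ m' = l ∧ _ := fun q hq => by
    obtain ⟨p1, p2, p3, p4, -⟩ := hpos q hq
    exact lengths_eq l l' m' _ _ hl h1'.hl h2'.hl hsum
      (mul_pos (div_pos (sub_pos.2 h1.hαβ) (mul_pos p1 p2))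
        (div_pos (sub_pos.2 h2.hαβ) (mul_pos p3 p4)))
      (fun τ => limit_eq b P P' hP hP' hcov a c a' c' hac l l l' m' α β γ δ α' β' γ' δ'
        h1 h2 h1' h2' τ q hq.1 (hpos q hq))
  have H0 := H (q0 / 2) ⟨by linarith, by linarith⟩
  refine ⟨⟨H0.1, H0.2.1⟩, ?_⟩
  have hs := sameData_of_eq hq0 h1.hαβ h2.hαβ hpos (fun q hq => (H q hq).2.2)
  have c1 := good_cross b P a c l l α β γ δ h1 h2
  have c2 := good_cross b P' a' c' l' m' α' β' γ' δ' h1' h2'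
  exact pairing hs h1.hαβ h2.hαβ c1.1 c1.2 h1'.hαβ h2'.hαβ c2.1 c2.2

lemma exists_basis (S : Set E3) (w : E3) (hw : ‖w‖ = 1)
    (hS : ∀ x ∈ S, ∀ y ∈ S, inner ℝ w x = inner ℝ w y)
    (h : Module.finrank ℝ (vectorSpan ℝ S) = 1) :
    ∃ b : OrthonormalBasis (Fin 3) ℝ E3, b 2 = w ∧ vectorSpan ℝ S = Submodule.span ℝ {b 0} := by
  obtain ⟨v, hv0, hv⟩ := finrank_eq_one_iff'.1 h
  have hv0' : (v : E3) ≠ 0 := by simpa using hv0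
  have hspan : vectorSpan ℝ S = Submodule.span ℝ {(v : E3)} := by
    apply le_antisymm
    · intro x hx
      obtain ⟨c, hc⟩ := hv ⟨x, hx⟩
      rw [Submodule.mem_span_singleton]
      exact ⟨c, by simpa using congrArg Subtype.val hc⟩
    · rw [Submodule.span_singleton_le_iff_mem]; exact v.2
  have horth : inner ℝ w (v : E3) = 0 := by
    have hle : vectorSpan ℝ S ≤ LinearMap.ker (innerSL ℝ w).toLinearMap := by
      rw [vectorSpan_def, Submodule.span_le]
      rintro _ ⟨x, hx, y, hy, rfl⟩
      simp [inner_sub_right, hS x hx y hy]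
    simpa using hle v.2
  have hn : ‖(v : E3)‖ ≠ 0 := norm_ne_zero_iff.2 hv0'
  set u : E3 := ‖(v : E3)‖⁻¹ • (v : E3) with hu
  have hu1 : ‖u‖ = 1 := by rw [hu, norm_smul, norm_inv, norm_norm, inv_mul_cancel₀ hn]
  have huw : inner ℝ w u = 0 := by rw [hu, inner_smul_right, horth, mul_zero]
  have huw' : inner ℝ u w = 0 := by rw [real_inner_comm]; exact huw
  have hon : Orthonormal ℝ (({0, 2} : Set (Fin 3)).domRestrict (![u, 0, w] : Fin 3 → E3)) := by
    constructor
    · rintro ⟨i, hi⟩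
      rcases hi with rfl | rfl
      · simpa using hu1
      · simpa using hw
    · rintro ⟨i, hi⟩ ⟨j, hj⟩ hij
      rcases hi with rfl | rfl <;> rcases hj with rfl | rfl
      · exact absurd rfl hij
      · simpa using huw'
      · simpa using huw
      · exact absurd rfl hij
  obtain ⟨b, hb⟩ := hon.exists_orthonormalBasis_extension_of_card_eq (by simp)
  refine ⟨b, by simpa using hb 2 (by simp), ?_⟩
  have hb0 : b 0 = u := by simpa using hb 0 (by simp)
  rw [hb0, hspan, hu]
  exact (Submodule.span_singleton_smul_eq (IsUnit.mk0 _ (inv_ne_zero hn)) _).symm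

lemma inner_const_of_span (b : OrthonormalBasis (Fin 3) ℝ E3) (S : Set E3)
    (h : vectorSpan ℝ S = Submodule.span ℝ {b 0}) :
    ∀ x ∈ S, ∀ y ∈ S, inner ℝ (b 1) x = inner ℝ (b 1) y := by
  intro x hx y hy
  have hm : x - y ∈ vectorSpan ℝ S := vsub_mem_vectorSpan ℝ hx hy
  rw [h, Submodule.mem_span_singleton] at hm
  obtain ⟨c, hc⟩ := hm
  have : inner ℝ (b 1) (x - y) = 0 := by
    rw [← hc, inner_smul_right, b.orthonormal.2 (by decide), mul_zero]
  rw [inner_sub_right] at this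
  linarith

lemma seg_add_inj (a c a' c' u : E3) (hu : ‖u‖ = 1) (l m l' m' : ℝ) (hl : 0 ≤ l) (hm : 0 ≤ m)
    (hl' : 0 ≤ l') (hm' : 0 ≤ m')
    (h : (fun s : ℝ => a + s • u) '' Set.Icc 0 l + (fun s : ℝ => c + s • u) '' Set.Icc 0 m =
      (fun s : ℝ => a' + s • u) '' Set.Icc 0 l' + (fun s : ℝ => c' + s • u) '' Set.Icc 0 m') :
    a + c = a' + c' ∧ l + m = l' + m' := by
  have key : ∀ (a c a' c' : E3) (l m l' m' : ℝ), 0 ≤ l → 0 ≤ m →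
    (fun s : ℝ => a + s • u) '' Set.Icc 0 l + (fun s : ℝ => c + s • u) '' Set.Icc 0 m ⊆
      (fun s : ℝ => a' + s • u) '' Set.Icc 0 l' + (fun s : ℝ => c' + s • u) '' Set.Icc 0 m' →
      (∃ r : ℝ, 0 ≤ r ∧ r ≤ l' + m' ∧ a + c = a' + c' + r • u) ∧
      (∃ r : ℝ, 0 ≤ r ∧ r ≤ l' + m' ∧ a + c + (l + m) • u = a' + c' + r • u) := by
    intro a c a' c' l m l' m' hl hm h
    constructor
    · have : (a + (0 : ℝ) • u) + (c + (0 : ℝ) • u) ∈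
        (fun s : ℝ => a + s • u) '' Set.Icc 0 l + (fun s : ℝ => c + s • u) '' Set.Icc 0 m :=
        Set.add_mem_add ⟨0, ⟨le_rfl, hl⟩, rfl⟩ ⟨0, ⟨le_rfl, hm⟩, rfl⟩
      obtain ⟨_, ⟨s, hs, rfl⟩, _, ⟨t, ht, rfl⟩, hst⟩ := h this
      refine ⟨s + t, add_nonneg hs.1 ht.1, add_le_add hs.2 ht.2, ?_⟩
      simp only [zero_smul, add_zero] at hst
      rw [← hst]; module
    · have : (a + l • u) + (c + m • u) ∈
        (fun s : ℝ => a + s • u) '' Set.Icc 0 l + (fun s : ℝ => c + s • u) '' Set.Icc 0 m :=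
        Set.add_mem_add ⟨l, ⟨hl, le_rfl⟩, rfl⟩ ⟨m, ⟨hm, le_rfl⟩, rfl⟩
      obtain ⟨_, ⟨s, hs, rfl⟩, _, ⟨t, ht, rfl⟩, hst⟩ := h this
      refine ⟨s + t, add_nonneg hs.1 ht.1, add_le_add hs.2 ht.2, ?_⟩
      have e : a + c + (l + m) • u = (a + l • u) + (c + m • u) := by module
      rw [e, ← hst]; module
  obtain ⟨⟨r1, r10, -, e1⟩, ⟨r2, -, r2l, e2⟩⟩ := key a c a' c' l m l' m' hl hm h.le
  obtain ⟨⟨r3, r30, -, e3⟩, ⟨r4, -, r4l, e4⟩⟩ := key a' c' a c l' m' l m hl' hm' h.ge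
  have hu0 : u ≠ 0 := by rintro rfl; simp at hu
  have z : ∀ r : ℝ, r • u = 0 → r = 0 := fun r hr => (smul_eq_zero.1 hr).resolve_right hu0
  have f1 : r1 + r3 = 0 := by
    apply z
    have : (r1 + r3) • u = (a' + c' + r1 • u) - (a' + c') + ((a + c + r3 • u) - (a + c)) := by
      module
    rw [this, ← e1, ← e3]; abel
  have g1 : r1 = 0 := by linarith
  have g3 : r3 = 0 := by linarith
  subst g1 g3
  simp only [zero_smul, add_zero] at e1
  refine ⟨e1, ?_⟩
  rw [e1] at e2 e4
  have f2 : l + m - r2 = 0 := by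
    apply z; rw [sub_smul, sub_eq_zero]; exact add_left_cancel e2
  have f4 : l' + m' - r4 = 0 := by
    apply z; rw [sub_smul, sub_eq_zero]; exact add_left_cancel e4
  linarith

lemma neg_seg (c u : E3) (l : ℝ) : -((fun s : ℝ => c + s • u) '' Set.Icc 0 l) =
    (fun s : ℝ => -c + s • (-u)) '' Set.Icc 0 l := by
  rw [← Set.image_neg_eq_neg, Set.image_image]
  congr 1
  funext s
  module

lemma span_neg_singleton' (u : E3) : Submodule.span ℝ {-u} = Submodule.span ℝ {u} := by
  rw [← Set.neg_singleton, Submodule.span_neg]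
/-- If `g_P = g_{P'}` and `S₁ = P_w`, `S₂ = P_{−w}` are parallel edges of `P` of equal
length, then `S₁' = P'_w`, `S₂' = P'_{−w}` are edges of `P'` parallel to `S₁` of the same
length, and the support cones match either directly or after a reflection. -/
theorem antipodal_parallel_edges_of_equal_length
    (P P' : Set (EuclideanSpace ℝ (Fin 3)))
    (hP : IsPolytope P) (hP' : IsPolytope P')
    (hPint : (interior P).Nonempty) (hP'int : (interior P').Nonempty)
    (hcov : covariogram P = covariogram P')
    (w : EuclideanSpace ℝ (Fin 3)) (hw : ‖w‖ = 1)
    (S₁ S₂ S₁' S₂' : Set (EuclideanSpace ℝ (Fin 3)))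
    (hS₁ : S₁ = exposedFace P w) (hS₂ : S₂ = exposedFace P (-w))
    (hS₁' : S₁' = exposedFace P' w) (hS₂' : S₂' = exposedFace P' (-w))
    -- `S₁` and `S₂` are edges of `P`
    (hedge₁ : Module.finrank ℝ (vectorSpan ℝ S₁) = 1)
    (hedge₂ : Module.finrank ℝ (vectorSpan ℝ S₂) = 1)
    -- they are parallel
    (hpar : vectorSpan ℝ S₁ = vectorSpan ℝ S₂)
    -- and of equal length
    (hlen : μH[1] S₁ = μH[1] S₂) :
    Module.finrank ℝ (vectorSpan ℝ S₁') = 1 ∧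
    Module.finrank ℝ (vectorSpan ℝ S₂') = 1 ∧
    vectorSpan ℝ S₁' = vectorSpan ℝ S₁ ∧
    vectorSpan ℝ S₂' = vectorSpan ℝ S₁ ∧
    μH[1] S₁' = μH[1] S₁ ∧ μH[1] S₂' = μH[1] S₁ ∧
    ((supportCone P S₁ = supportCone P' S₁' ∧ supportCone P S₂ = supportCone P' S₂') ∨
      (supportCone P S₁ = -supportCone P' S₂' ∧ supportCone P S₂ = -supportCone P' S₁')) := by
  have hwface : ∀ x ∈ S₁, ∀ y ∈ S₁, inner ℝ w x = inner ℝ w y := by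
    rw [hS₁]
    intro x hx y hy
    exact le_antisymm (hy.2 x hx.1) (hx.2 y hy.1)
  obtain ⟨b, hb2, hspan⟩ := exists_basis S₁ w hw hwface hedge₁
  have hspan2 : vectorSpan ℝ S₂ = Submodule.span ℝ {b 0} := hpar ▸ hspan
  have hu : ‖b 0‖ = 1 := b.orthonormal.1 0
  subst hb2
  -- the faces in direction `-w` in terms of the reflected bodies
  have e2 : exposedFace (-P) (b 2) = -S₂ := by rw [hS₂, exposedFace_neg, neg_neg]
  have e2' : exposedFace (-P') (b 2) = -S₂' := by rw [hS₂', exposedFace_neg, neg_neg]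
  have c1 := inner_const_of_span b S₁ hspan
  have c2 : ∀ x ∈ -S₂, ∀ y ∈ -S₂, inner ℝ (b 1) x = inner ℝ (b 1) y := by
    intro x hx y hy
    have := inner_const_of_span b S₂ hspan2 _ hx _ hy
    simpa [inner_neg_right] using this
  -- equality of the difference bodies
  have hdiff : P + -P = P' + -P' :=
    Set.Subset.antisymm
      (sub_body_subset hP.isCompact hP.convex hP'.isCompact hPint hcov)
      (sub_body_subset hP'.isCompact hP'.convex hP.isCompact hP'int hcov.symm)
  have hsum : S₁ + -S₂ = S₁' + -S₂' := by
    rw [← e2, ← e2', hS₁, hS₁', ← exposedFace_add, ← exposedFace_add, hdiff]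
  have c12 : ∀ x ∈ S₁' + -S₂', ∀ y ∈ S₁' + -S₂', inner ℝ (b 1) x = inner ℝ (b 1) y := by
    rw [← hsum]
    rintro _ ⟨x, hx, y, hy, rfl⟩ _ ⟨z, hz, t, ht, rfl⟩
    simp only [inner_add_right, c1 x hx z hz, c2 y hy t ht]
  have hne1 : S₁.Nonempty := by
    rw [Set.nonempty_iff_ne_empty]; rintro h
    rw [h, vectorSpan_empty, finrank_bot] at hedge₁
    exact zero_ne_one hedge₁
  have hne2 : S₂.Nonempty := by
    rw [Set.nonempty_iff_ne_empty]; rintro h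
    rw [h, vectorSpan_empty, finrank_bot] at hedge₂
    exact zero_ne_one hedge₂
  have hne : (S₁' + -S₂').Nonempty := hsum ▸ hne1.add hne2.neg
  obtain ⟨_, ⟨p, hp, r, hr, -⟩⟩ := hne
  have c1' : ∀ x ∈ S₁', ∀ y ∈ S₁', inner ℝ (b 1) x = inner ℝ (b 1) y := by
    intro x hx y hy
    have := c12 _ (Set.add_mem_add hx hr) _ (Set.add_mem_add hy hr)
    simpa [inner_add_right] using this
  have c2' : ∀ x ∈ -S₂', ∀ y ∈ -S₂', inner ℝ (b 1) x = inner ℝ (b 1) y := by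
    intro x hx y hy
    have := c12 _ (Set.add_mem_add hp hx) _ (Set.add_mem_add hp hy)
    simpa [inner_add_right] using this
  have hnint : ∀ Q : Set E3, (interior Q).Nonempty → (interior (-Q)).Nonempty := by
    intro Q hQ
    have : interior (-Q) = -interior Q := ((Homeomorph.neg E3).preimage_interior Q).symm
    rw [this]; exact hQ.neg
  obtain ⟨a, l, α, β, h1, f1⟩ := exists_good b P hP hPint (hS₁ ▸ c1)
  obtain ⟨c, m, γ, δ, h2, f2⟩ := exists_good b (-P) hP.neg (hnint P hPint) (e2 ▸ c2)
  obtain ⟨a', l', α', β', h1', f1'⟩ := exists_good b P' hP' hP'int (hS₁' ▸ c1')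
  obtain ⟨c', m', γ', δ', h2', f2'⟩ := exists_good b (-P') hP'.neg (hnint P' hP'int) (e2' ▸ c2')
  rw [← hS₁] at f1
  rw [e2] at f2
  rw [← hS₁'] at f1'
  rw [e2'] at f2'
  have g2 : S₂ = (fun s : ℝ => -c + s • (-b 0)) '' Set.Icc 0 m := by
    rw [← neg_seg, ← f2, neg_neg]
  have g2' : S₂' = (fun s : ℝ => -c' + s • (-b 0)) '' Set.Icc 0 m' := by
    rw [← neg_seg, ← f2', neg_neg]
  have hnu : ‖-b 0‖ = 1 := by rw [norm_neg, hu]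
  obtain ⟨hac, hlm⟩ := seg_add_inj a c a' c' (b 0) hu l m l' m' h1.hl h2.hl h1'.hl h2'.hl
    (by rw [← f1, ← f2, ← f1', ← f2', hsum])
  have hl : 0 < l := by
    refine lt_of_le_of_ne h1.hl ?_
    rintro rfl
    rw [f1] at hedge₁
    rw [Set.Icc_self, Set.image_singleton, vectorSpan_singleton, finrank_bot] at hedge₁
    exact zero_ne_one hedge₁
  have hml : m = l := by
    rw [f1, g2, hausdorff_seg _ _ hu, hausdorff_seg _ _ hnu] at hlen
    exact ((ENNReal.ofReal_eq_ofReal_iff h1.hl h2.hl).1 hlen).symm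
  subst hml
  obtain ⟨⟨rfl, rfl⟩, hpair⟩ := data_eq b P P' hP.isCompact hP'.isCompact hcov a c a' c' hac
    _ l' m' α β γ δ α' β' γ' δ' h1 h2 h1' h2' hl hlm.symm
  have v1' : vectorSpan ℝ S₁' = Submodule.span ℝ {b 0} := by
    rw [f1', vectorSpan_seg _ _ _ hl]
  have v2' : vectorSpan ℝ S₂' = Submodule.span ℝ {b 0} := by
    rw [g2', vectorSpan_seg _ _ _ hl, span_neg_singleton']
  have k1 := supportCone_good b P S₁ a _ α β h1 hl f1
  have k2 : supportCone P S₂ = -(coordE b 1 one_ne_zero '' {p | p.2 ∈ planeCone γ δ}) := by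
    rw [← supportCone_good b (-P) (-S₂) c _ γ δ h2 hl f2, supportCone_neg, neg_neg]
  have k1' := supportCone_good b P' S₁' a' _ α' β' h1' hl f1'
  have k2' : supportCone P' S₂' = -(coordE b 1 one_ne_zero '' {p | p.2 ∈ planeCone γ' δ'}) := by
    rw [← supportCone_good b (-P') (-S₂') c' _ γ' δ' h2' hl f2', supportCone_neg, neg_neg]
  refine ⟨?_, ?_, ?_, ?_, ?_, ?_, ?_⟩
  · rw [v1', ← hspan]; exact hedge₁
  · rw [v2', ← hspan]; exact hedge₁
  · rw [v1', hspan]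
  · rw [v2', hspan]
  · rw [f1', f1, hausdorff_seg _ _ hu, hausdorff_seg _ _ hu]
  · rw [g2', f1, hausdorff_seg _ _ hnu, hausdorff_seg _ _ hu]
  · rw [k1, k2, k1', k2']
    rcases hpair with ⟨rfl, rfl, rfl, rfl⟩ | ⟨rfl, rfl, rfl, rfl⟩
    · exact Or.inl ⟨rfl, rfl⟩
    · exact Or.inr ⟨(neg_neg _).symm, rfl⟩
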